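/- Let (u, π, v, θ) be a smooth solution of the stationary 3D tropical climate model. Suppose p ∈ [3, 9/2], q ∈ [1, 2p′), r ∈ [1, 2p′) where p′ = p/(p−1), and u ∈ L^p(ℝ³), v ∈ L^q(ℝ³), θ ∈ L^r(ℝ³). Then u = 0, v = 0 and θ = 0 identically on ℝ³. -/

import Mathlib

open MeasureTheory Filter Metric

noncomputable section

abbrev R3 : Type := EuclideanSpace ℝ (Fin 3)

/-- Partial derivative of `f` in the `j`-th coordinate direction. -/
def pd (f : R3 → ℝ) (j : Fin 3) (x : R3) : ℝ :=
  fderiv ℝ f x (EuclideanSpace.single j 1)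

/-- Laplacian of `f`. -/
def lap (f : R3 → ℝ) (x : R3) : ℝ := ∑ j, pd (pd f j) j x

/-- The stationary 3D tropical climate model:
`-Δu + (u·∇)u + ∇π + div(v⊗v) = 0`, `-Δv + (u·∇)v + ∇θ + (v·∇)u = 0`,
`-Δθ + u·∇θ + div v = 0`, `div u = 0`. -/
def TCM (u v : R3 → R3) (pr θ : R3 → ℝ) : Prop :=
  (∀ i x, -lap (fun y => u y i) x + (∑ j, u x j * pd (fun y => u y i) j x)
      + pd pr i x + (∑ j, pd (fun y => v y j * v y i) j x) = 0) ∧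
  (∀ i x, -lap (fun y => v y i) x + (∑ j, u x j * pd (fun y => v y i) j x)
      + pd θ i x + (∑ j, v x j * pd (fun y => u y i) j x) = 0) ∧
  (∀ x, -lap θ x + (∑ j, u x j * pd θ j x) + (∑ j, pd (fun y => v y j) j x) = 0) ∧
  (∀ x, (∑ j, pd (fun y => u y j) j x) = 0)

/-!
The argument is hole filling for the Caccioppoli inequality. Testing the system with a cutoff times
`w = (u, v, θ)` bounds `∫ |∇w|²` over a ball by terms in which a derivative falls on the cutoff. The
pressure term needs no decay of `π`: writing the divergence of a test field as the Laplacian of a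
truncated Newtonian potential plus a mollification, and integrating by parts, only `u` and the
stress `u ⊗ u + v ⊗ v` remain. Interpolating between the assumed integrability and `L⁶`, these terms
are `o(W³)` on balls of radius comparable to `R → ∞`, where `W¹⁰ = 1 + ∫ |w|⁶`. By the Sobolev
inequality the dissipation in a slightly larger ball controls `W ^ (10 / 3)`. Absorbing and
iterating over the radii, one finds that the scale-invariant energy of the ball of radius `R` tends
to zero, and then `∫ |w|⁶ = 0`, again by the Sobolev inequality.
-/

open scoped ContDiff ENNReal

section PartialDerivatives

variable {f g : R3 → ℝ} {x : R3}

lemma pd_eq_of_hasFDerivAt {f' : R3 →L[ℝ] ℝ} (hf : HasFDerivAt f f' x) (j : Fin 3) :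
    pd f j x = f' (EuclideanSpace.single j 1) := by
  rw [pd, hf.fderiv]

lemma contDiff_pd (hf : ContDiff ℝ ∞ f) (j : Fin 3) : ContDiff ℝ ∞ (pd f j) :=
  (hf.fderiv_right (by simp)).clm_apply contDiff_const

lemma differentiable_of_smooth (hf : ContDiff ℝ ∞ f) : Differentiable ℝ f :=
  hf.differentiable (by simp)

lemma contDiff_lap (hf : ContDiff ℝ ∞ f) : ContDiff ℝ ∞ (lap f) :=
  ContDiff.sum fun j _ => contDiff_pd (contDiff_pd hf j) j

lemma pd_fun_add (hf : DifferentiableAt ℝ f x) (hg : DifferentiableAt ℝ g x) (j : Fin 3) :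
    pd (fun y => f y + g y) j x = pd f j x + pd g j x :=
  pd_eq_of_hasFDerivAt (hf.hasFDerivAt.add hg.hasFDerivAt) j

lemma pd_fun_mul (hf : DifferentiableAt ℝ f x) (hg : DifferentiableAt ℝ g x) (j : Fin 3) :
    pd (fun y => f y * g y) j x = f x * pd g j x + pd f j x * g x := by
  simp [pd, fderiv_fun_mul hf hg, mul_comm (g x)]

lemma pd_const_mul (hf : DifferentiableAt ℝ f x) (c : ℝ) (j : Fin 3) :
    pd (fun y => c * f y) j x = c * pd f j x := by
  simp [pd, fderiv_const_mul hf]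

lemma pd_fun_sum {ι : Type*} (s : Finset ι) {F : ι → R3 → ℝ}
    (hF : ∀ i ∈ s, DifferentiableAt ℝ (F i) x) (j : Fin 3) :
    pd (fun y => ∑ i ∈ s, F i y) j x = ∑ i ∈ s, pd (F i) j x := by
  simp [pd, fderiv_fun_sum hF]

lemma pd_pd_comm (hf : ContDiff ℝ ∞ f) (i j : Fin 3) : pd (pd f i) j = pd (pd f j) i := by
  ext x
  have hd : DifferentiableAt ℝ (fderiv ℝ f) x :=
    (hf.fderiv_right (m := ∞) (by simp)).differentiable (by simp) x
  have pd_pd_eq (a b : Fin 3) : pd (pd f a) b x =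
      fderiv ℝ (fderiv ℝ f) x (EuclideanSpace.single b 1) (EuclideanSpace.single a 1) := by
    exact (pd_eq_of_hasFDerivAt (hd.hasFDerivAt.clm_apply
      (hasFDerivAt_const (EuclideanSpace.single a (1 : ℝ)) x)) b).trans (by simp)
  have hsymm : IsSymmSndFDerivAt ℝ f x :=
    hf.contDiffAt.isSymmSndFDerivAt (by
      simpa using WithTop.coe_le_coe.mpr (le_top : (2 : ℕ∞) ≤ ⊤))
  rw [pd_pd_eq, pd_pd_eq, hsymm.eq]

lemma lap_pd (hf : ContDiff ℝ ∞ f) (i : Fin 3) : lap (pd f i) = pd (lap f) i := by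
  ext x
  unfold lap
  rw [pd_fun_sum _ fun j _ => differentiable_of_smooth (contDiff_pd (contDiff_pd hf j) j) x]
  refine Finset.sum_congr rfl fun j _ => ?_
  rw [pd_pd_comm hf i j, pd_pd_comm (contDiff_pd hf j) i j]

lemma fderiv_eq_sum_pd (f : R3 → ℝ) (x w : R3) : fderiv ℝ f x w = ∑ j, w j * pd f j x := by
  conv_lhs => rw [← (EuclideanSpace.basisFun (Fin 3) ℝ).sum_repr w, map_sum]
  simp [pd]

lemma tsupport_pd_subset (f : R3 → ℝ) (j : Fin 3) : tsupport (pd f j) ⊆ tsupport f :=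
  closure_minimal (fun y hy => support_fderiv_subset ℝ fun h : fderiv ℝ f y = 0 =>
    hy (by simp [pd, h])) isClosed_closure

lemma tsupport_lap_subset (f : R3 → ℝ) : tsupport (lap f) ⊆ tsupport f := by
  refine closure_minimal (fun y hy => ?_) isClosed_closure
  obtain ⟨j, -, hj⟩ := Finset.exists_ne_zero_of_sum_ne_zero hy
  exact tsupport_pd_subset f j (tsupport_pd_subset _ j (subset_tsupport _ hj))

lemma hasCompactSupport_pd (hf : HasCompactSupport f) (j : Fin 3) :
    HasCompactSupport (pd f j) :=
  hf.of_isClosed_subset isClosed_closure (tsupport_pd_subset f j)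

lemma hasCompactSupport_lap (hf : HasCompactSupport f) : HasCompactSupport (lap f) :=
  hf.of_isClosed_subset isClosed_closure (tsupport_lap_subset f)

lemma hasCompactSupport_of_tsupport_subset_closedBall {r : ℝ}
    (hf : tsupport f ⊆ closedBall 0 r) : HasCompactSupport f :=
  (isCompact_closedBall 0 r).of_isClosed_subset isClosed_closure hf

lemma integral_mul_pd (hf : ContDiff ℝ 1 f) (hg : ContDiff ℝ 1 g) (hc : HasCompactSupport g)
    (j : Fin 3) : ∫ x, f x * pd g j x = -∫ x, pd f j x * g x := by
  have hf' : Continuous (pd f j) := (hf.continuous_fderiv one_ne_zero).clm_apply continuous_const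
  have hg' : Continuous (pd g j) := (hg.continuous_fderiv one_ne_zero).clm_apply continuous_const
  exact integral_mul_fderiv_eq_neg_fderiv_mul_of_integrable
    ((hf'.mul hg.continuous).integrable_of_hasCompactSupport hc.mul_left)
    ((hf.continuous.mul hg').integrable_of_hasCompactSupport (hasCompactSupport_pd hc j).mul_left)
    ((hf.continuous.mul hg.continuous).integrable_of_hasCompactSupport hc.mul_left)
    (fun x _ => hf.differentiable one_ne_zero x) fun x _ => hg.differentiable one_ne_zero x

end PartialDerivatives

section LTwo

variable {α : Type*} [MeasurableSpace α] {μ : Measure α} {f g : α → ℝ}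

lemma lpNorm_two_eq_sqrt_integral (hf : AEStronglyMeasurable f μ) :
    lpNorm f 2 μ = √(∫ x, f x ^ 2 ∂μ) := by
  rw [lpNorm_eq_integral_norm_rpow_toReal two_ne_zero ENNReal.ofNat_ne_top hf, Real.sqrt_eq_rpow]
  simp

lemma abs_integral_mul_le_lpNorm_mul_lpNorm (hf : MemLp f 2 μ) (hg : MemLp g 2 μ) :
    |∫ x, f x * g x ∂μ| ≤ lpNorm f 2 μ * lpNorm g 2 μ := by
  have hinner : inner ℝ (hf.toLp f) (hg.toLp g) = ∫ x, f x * g x ∂μ := by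
    rw [L2.inner_def]
    refine integral_congr_ae ?_
    filter_upwards [hf.coeFn_toLp, hg.coeFn_toLp] with x hfx hgx
    rw [hfx, hgx]
    simp [mul_comm]
  rw [← hinner, ← toReal_eLpNorm hf.1, ← toReal_eLpNorm hg.1, ← Lp.norm_toLp f hf,
    ← Lp.norm_toLp g hg]
  exact abs_real_inner_le_norm _ _

end LTwo

section Smear

universe u

variable {α : Type*} [MeasurableSpace α] {E F : Type*} [NormedAddCommGroup E]
  [NormedAddCommGroup F] [NormedSpace ℝ F]

/-- The average `x ↦ ∫ k(a) f(x - φ(a)) dν(a)` of the translates of `f` by `φ`, weighted by `k`.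
For `φ = (s • ·)` it is the convolution of `f` with a dilate of `k`; a general parameter space `α`
allows one to average over the scale as well. -/
def smear (ν : Measure α) (k : α → ℝ) (φ : α → E) (f : E → F) (x : E) : F :=
  ∫ a, k a • f (x - φ a) ∂ν

variable {ν : Measure α} {k : α → ℝ} {φ : α → E} {f : E → F}

lemma tsupport_smear_subset {r s : ℝ} (hφ : ∀ᵐ a ∂ν, k a ≠ 0 → ‖φ a‖ ≤ s)
    (hf : tsupport f ⊆ closedBall 0 r) :
    tsupport (smear ν k φ f) ⊆ closedBall 0 (r + s) := by
  refine closure_minimal (fun x hx => ?_) isClosed_closedBall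
  by_contra hxr
  refine hx (integral_eq_zero_of_ae ?_)
  filter_upwards [hφ] with a ha
  by_contra h
  have hk : k a ≠ 0 := fun h0 => h (by simp [h0])
  have hfx : f (x - φ a) ≠ 0 := fun h0 => h (by simp [h0])
  have hxφ : ‖x - φ a‖ ≤ r := mem_closedBall_zero_iff.mp (hf (subset_tsupport f hfx))
  rw [mem_closedBall_zero_iff] at hxr
  exact hxr ((norm_le_norm_sub_add x (φ a)).trans (add_le_add hxφ (ha hk)))

variable [MeasurableSpace E] [BorelSpace E] [SecondCountableTopology E]

lemma integrable_smear (hk : Integrable k ν) (hφ : Measurable φ) (hf : Continuous f)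
    (hc : HasCompactSupport f) (x : E) : Integrable (fun a => k a • f (x - φ a)) ν := by
  obtain ⟨C, hC⟩ := hc.exists_bound_of_continuous hf
  exact hk.smul_bdd C (hf.comp_aestronglyMeasurable
    (hφ.const_sub x).aestronglyMeasurable) (Eventually.of_forall fun a => hC _)

lemma hasFDerivAt_smear [NormedSpace ℝ E] (hk : Integrable k ν) (hφ : Measurable φ)
    (hf : ContDiff ℝ 1 f) (hc : HasCompactSupport f) (x : E) :
    HasFDerivAt (smear ν k φ f) (smear ν k φ (fderiv ℝ f) x) x := by
  have hf' : Continuous (fderiv ℝ f) := hf.continuous_fderiv one_ne_zero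
  obtain ⟨C, hC⟩ := (hc.fderiv ℝ).exists_bound_of_continuous hf'
  refine hasFDerivAt_integral_of_dominated_of_fderiv_le (s := Set.univ) (𝕜 := ℝ)
    (F' := fun y a => k a • fderiv ℝ f (y - φ a)) (bound := fun a => ‖k a‖ * C) univ_mem
    (Eventually.of_forall fun y => (integrable_smear hk hφ hf.continuous hc y).1)
    (integrable_smear hk hφ hf.continuous hc x)
    (integrable_smear hk hφ hf' (hc.fderiv ℝ) x).1
    (Eventually.of_forall fun a y _ => ?_) (hk.norm.mul_const C)
    (Eventually.of_forall fun a y _ => ?_)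
  · rw [norm_smul]
    exact mul_le_mul_of_nonneg_left (hC _) (norm_nonneg _)
  · have hsub : HasFDerivAt (fun y => y - φ a) (.id ℝ E) y := (hasFDerivAt_id y).sub_const _
    exact (((hf.differentiable one_ne_zero _).hasFDerivAt.comp y hsub).const_smul (k a))

lemma contDiff_smear {E F : Type u} [NormedAddCommGroup E] [NormedSpace ℝ E] [MeasurableSpace E]
    [BorelSpace E] [SecondCountableTopology E] [NormedAddCommGroup F] [NormedSpace ℝ F]
    {φ : α → E} (hk : Integrable k ν) (hφ : Measurable φ) {f : E → F}
    (hf : ContDiff ℝ ∞ f) (hc : HasCompactSupport f) : ContDiff ℝ ∞ (smear ν k φ f) := by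
  refine contDiff_infty.mpr fun n => ?_
  induction n generalizing F with
  | zero =>
    exact contDiff_zero.mpr (continuous_iff_continuousAt.mpr fun x =>
      (hasFDerivAt_smear hk hφ (hf.of_le (by simp)) hc x).continuousAt)
  | succ n ih =>
    have hderiv := hasFDerivAt_smear hk hφ (hf.of_le (by simp)) hc
    refine contDiff_succ_iff_hasFDerivAt.mpr
      ⟨smear ν k φ (fderiv ℝ f), ih (hf.fderiv_right (by simp)) (hc.fderiv ℝ), hderiv⟩

lemma lintegral_mul_rpow_le {k g : α → ℝ≥0∞} (hk : Measurable k) (hg : Measurable g) {p : ℝ}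
    (hp : 1 ≤ p) :
    (∫⁻ a, k a * g a ∂ν) ^ p ≤ (∫⁻ a, k a ∂ν) ^ (p - 1) * ∫⁻ a, k a * g a ^ p ∂ν := by
  have hp0 : 0 < p := one_pos.trans_le hp
  have jensen := eLpNorm_le_eLpNorm_mul_rpow_measure_univ (μ := ν.withDensity k) (f := g)
    (ENNReal.one_le_ofReal.mpr hp) hg.aestronglyMeasurable
  rw [eLpNorm_one_eq_lintegral_enorm, eLpNorm_eq_lintegral_rpow_enorm_toReal (by simpa)
    ENNReal.ofReal_ne_top, withDensity_apply _ .univ, Measure.restrict_univ,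
    ENNReal.toReal_ofReal hp0.le, ENNReal.toReal_one] at jensen
  simp only [enorm_eq_self] at jensen
  rw [lintegral_withDensity_eq_lintegral_mul ν hk hg,
    lintegral_withDensity_eq_lintegral_mul ν hk (hg.pow_const p)] at jensen
  refine (ENNReal.rpow_le_rpow jensen hp0.le).trans_eq ?_
  rw [ENNReal.mul_rpow_of_nonneg _ _ hp0.le, ← ENNReal.rpow_mul, ← ENNReal.rpow_mul,
    one_div_mul_cancel hp0.ne', ENNReal.rpow_one, mul_comm]
  congr 2
  field_simp

/-- Young's convolution inequality, with the kernel replaced by a weighted family of translates. -/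
lemma eLpNorm_smear_le [SFinite ν] {μ : Measure E} [SFinite μ] [μ.IsAddRightInvariant]
    (hk : Measurable k) (hφ : Measurable φ) (hf : Continuous f) {p : ℝ} (hp : 1 ≤ p) :
    eLpNorm (smear ν k φ f) (ENNReal.ofReal p) μ ≤
      (∫⁻ a, ‖k a‖ₑ ∂ν) * eLpNorm f (ENNReal.ofReal p) μ := by
  have hp0 : 0 < p := one_pos.trans_le hp
  set K := ∫⁻ a, ‖k a‖ₑ ∂ν
  have hf_meas : Measurable fun q : E × α => ‖f (q.1 - φ q.2)‖ₑ :=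
    hf.enorm.measurable.comp (measurable_fst.sub (hφ.comp measurable_snd))
  have hkf_meas : Measurable fun q : E × α => ‖k q.2‖ₑ * ‖f (q.1 - φ q.2)‖ₑ ^ p :=
    (hk.enorm.comp measurable_snd).mul (hf_meas.pow_const p)
  have pointwise (x : E) :
      ‖smear ν k φ f x‖ₑ ^ p ≤ K ^ (p - 1) * ∫⁻ a, ‖k a‖ₑ * ‖f (x - φ a)‖ₑ ^ p ∂ν := by
    refine (ENNReal.rpow_le_rpow (enorm_integral_le_lintegral_enorm _) hp0.le).trans ?_
    simp only [enorm_smul]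
    exact lintegral_mul_rpow_le hk.enorm (hf_meas.comp measurable_prodMk_left) hp
  have fubini : ∫⁻ x, ∫⁻ a, ‖k a‖ₑ * ‖f (x - φ a)‖ₑ ^ p ∂ν ∂μ = K * ∫⁻ x, ‖f x‖ₑ ^ p ∂μ := by
    rw [lintegral_lintegral_swap hkf_meas.aemeasurable]
    have translate (a : α) :
        ∫⁻ x, ‖k a‖ₑ * ‖f (x - φ a)‖ₑ ^ p ∂μ = ‖k a‖ₑ * ∫⁻ x, ‖f x‖ₑ ^ p ∂μ := by
      rw [lintegral_const_mul' _ _ enorm_ne_top,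
        lintegral_sub_right_eq_self (μ := μ) fun x => ‖f x‖ₑ ^ p]
    simp_rw [translate]
    exact lintegral_mul_const _ hk.enorm
  rw [eLpNorm_eq_lintegral_rpow_enorm_toReal (by simpa) ENNReal.ofReal_ne_top,
    eLpNorm_eq_lintegral_rpow_enorm_toReal (by simpa) ENNReal.ofReal_ne_top,
    ENNReal.toReal_ofReal hp0.le, one_div, ENNReal.rpow_inv_le_iff hp0,
    ENNReal.mul_rpow_of_nonneg _ _ hp0.le, ENNReal.rpow_inv_rpow hp0.ne']
  calc ∫⁻ x, ‖smear ν k φ f x‖ₑ ^ p ∂μ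
      ≤ ∫⁻ x, K ^ (p - 1) * ∫⁻ a, ‖k a‖ₑ * ‖f (x - φ a)‖ₑ ^ p ∂ν ∂μ := lintegral_mono pointwise
    _ = K ^ (p - 1) * (K * ∫⁻ x, ‖f x‖ₑ ^ p ∂μ) := by
        rw [lintegral_const_mul _ hkf_meas.lintegral_prod_right', fubini]
    _ = K ^ p * ∫⁻ x, ‖f x‖ₑ ^ p ∂μ := by
        nth_rw 2 [← ENNReal.rpow_one K]
        rw [← mul_assoc, ← ENNReal.rpow_add_of_nonneg _ _ (sub_nonneg.mpr hp) zero_le_one,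
          sub_add_cancel]

lemma lpNorm_two_smear_le [SFinite ν] {μ : Measure E} [SFinite μ] [μ.IsAddRightInvariant]
    (hk : Measurable k) (hki : Integrable k ν) (hφ : Measurable φ) (hf : Continuous f)
    (hf2 : MemLp f 2 μ) : lpNorm (smear ν k φ f) 2 μ ≤ (∫ a, |k a| ∂ν) * lpNorm f 2 μ := by
  by_cases hs : AEStronglyMeasurable (smear ν k φ f) μ
  · have young := eLpNorm_smear_le (μ := μ) (ν := ν) hk hφ hf one_le_two
    rw [ENNReal.ofReal_ofNat] at young
    rw [← toReal_eLpNorm hs, ← toReal_eLpNorm hf2.1]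
    simp_rw [← Real.norm_eq_abs]
    rw [integral_norm_eq_lintegral_enorm hki.1, ← ENNReal.toReal_mul]
    exact ENNReal.toReal_mono (ENNReal.mul_ne_top hki.2.ne hf2.2.ne) young
  · rw [lpNorm_of_not_aestronglyMeasurable hs]
    exact mul_nonneg (integral_nonneg fun a => abs_nonneg _) lpNorm_nonneg

end Smear

section SmearR3

variable {α : Type*} [MeasurableSpace α] {ν : Measure α} {k : α → ℝ} {φ : α → R3} {f : R3 → ℝ}

lemma pd_smear (hk : Integrable k ν) (hφ : Measurable φ) (hf : ContDiff ℝ 1 f)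
    (hc : HasCompactSupport f) (j : Fin 3) : pd (smear ν k φ f) j = smear ν k φ (pd f j) := by
  ext x
  rw [pd_eq_of_hasFDerivAt (hasFDerivAt_smear hk hφ hf hc x), smear,
    ContinuousLinearMap.integral_apply
      (integrable_smear hk hφ (hf.continuous_fderiv one_ne_zero) (hc.fderiv ℝ) x)]
  rfl

lemma lap_smear (hk : Integrable k ν) (hφ : Measurable φ) (hf : ContDiff ℝ ∞ f)
    (hc : HasCompactSupport f) : lap (smear ν k φ f) = smear ν k φ (lap f) := by
  ext x
  have hpd (j : Fin 3) : ContDiff ℝ ∞ (pd f j) := contDiff_pd hf j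
  simp only [lap, pd_smear hk hφ (hf.of_le (by simp)) hc,
    pd_smear hk hφ ((hpd _).of_le (by simp)) (hasCompactSupport_pd hc _)]
  simp only [smear, lap, Finset.smul_sum]
  exact (integral_finsetSum _ fun j _ => integrable_smear hk hφ (contDiff_pd (hpd j) j).continuous
    (hasCompactSupport_pd (hasCompactSupport_pd hc j) j) x).symm

end SmearR3

section RadialCutoff

/-- The smooth radial function `x ↦ H (a - b ‖x‖²)`, with `H` the standard smooth transition
from `0` to `1`. -/
def radialCutoff (a b : ℝ) (x : R3) : ℝ := Real.smoothTransition (a - b * ‖x‖ ^ 2)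

/-- The scalar factor of `∇ (radialCutoff a b) = -radialSlope a b • x`. -/
def radialSlope (a b : ℝ) (x : R3) : ℝ :=
  2 * b * deriv Real.smoothTransition (a - b * ‖x‖ ^ 2)

variable {a b : ℝ}

lemma contDiff_deriv_smoothTransition : ContDiff ℝ ∞ (deriv Real.smoothTransition) :=
  (contDiff_infty_iff_deriv.mp Real.smoothTransition.contDiff).2

lemma contDiff_radialCutoff (a b : ℝ) : ContDiff ℝ ∞ (radialCutoff a b) :=
  Real.smoothTransition.contDiff.comp (contDiff_const.sub (contDiff_const.mul (contDiff_norm_sq ℝ)))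

lemma contDiff_radialSlope (a b : ℝ) : ContDiff ℝ ∞ (radialSlope a b) :=
  contDiff_const.mul (contDiff_deriv_smoothTransition.comp
    (contDiff_const.sub (contDiff_const.mul (contDiff_norm_sq ℝ))))

lemma pd_comp_sub_mul_norm_sq {H : ℝ → ℝ} (hH : Differentiable ℝ H) (a b : ℝ) (j : Fin 3)
    (x : R3) :
    pd (fun y => H (a - b * ‖y‖ ^ 2)) j x = -(x j * (2 * b * deriv H (a - b * ‖x‖ ^ 2))) := by
  have hq : HasFDerivAt (fun y : R3 => a - b * ‖y‖ ^ 2) (-(b • 2 • innerSL ℝ x)) x :=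
    ((hasStrictFDerivAt_norm_sq x).hasFDerivAt.const_mul b).const_sub a
  refine (pd_eq_of_hasFDerivAt ((hH _).hasDerivAt.comp_hasFDerivAt x hq) j).trans ?_
  simp [EuclideanSpace.inner_single_right]
  ring

lemma pd_radialCutoff (a b : ℝ) (j : Fin 3) (x : R3) :
    pd (radialCutoff a b) j x = -(x j * radialSlope a b x) :=
  pd_comp_sub_mul_norm_sq (Real.smoothTransition.contDiff.differentiable one_ne_zero) a b j x

lemma radialCutoff_nonneg (x : R3) : 0 ≤ radialCutoff a b x := Real.smoothTransition.nonneg _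

lemma radialSlope_nonneg (hb : 0 ≤ b) (x : R3) : 0 ≤ radialSlope a b x :=
  mul_nonneg (by positivity) Real.smoothTransition.monotone.deriv_nonneg

lemma radialCutoff_eq_zero {x : R3} (hx : a ≤ b * ‖x‖ ^ 2) : radialCutoff a b x = 0 :=
  Real.smoothTransition.zero_of_nonpos (by linarith)

lemma deriv_smoothTransition_eq_zero_of_neg {t : ℝ} (ht : t < 0) :
    deriv Real.smoothTransition t = 0 := by
  have hloc : Real.smoothTransition =ᶠ[nhds t] fun _ => 0 := by
    filter_upwards [Iio_mem_nhds ht] with y hy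
    exact Real.smoothTransition.zero_of_nonpos (Set.mem_Iio.mp hy).le
  rw [hloc.deriv_eq, deriv_const]

lemma radialSlope_eq_zero {x : R3} (hx : a < b * ‖x‖ ^ 2) : radialSlope a b x = 0 := by
  rw [radialSlope, deriv_smoothTransition_eq_zero_of_neg (by linarith), mul_zero]

lemma tsupport_radialCutoff_subset {r : ℝ} (h : ∀ t, r < t → a ≤ b * t ^ 2) :
    tsupport (radialCutoff a b) ⊆ closedBall 0 r := by
  refine closure_minimal (fun x hx => ?_) isClosed_closedBall
  by_contra hxr
  rw [mem_closedBall_zero_iff, not_le] at hxr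
  exact hx (radialCutoff_eq_zero (h _ hxr))

end RadialCutoff

section Parametrix

lemma lt_one_mul_norm_sq {x : R3} (hx : x ∉ closedBall (0 : R3) 1) : 1 < 1 * ‖x‖ ^ 2 := by
  rw [mem_closedBall_zero_iff, not_le] at hx
  nlinarith

lemma hasCompactSupport_radialCutoff_one : HasCompactSupport (radialCutoff 1 1) :=
  .intro (isCompact_closedBall 0 1) fun _ hx => radialCutoff_eq_zero (lt_one_mul_norm_sq hx).le

lemma hasCompactSupport_radialSlope_one : HasCompactSupport (radialSlope 1 1) :=
  .intro (isCompact_closedBall 0 1) fun _ hx => radialSlope_eq_zero (lt_one_mul_norm_sq hx)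

lemma integrable_radialCutoff_one : Integrable (radialCutoff 1 1) :=
  (contDiff_radialCutoff 1 1).continuous.integrable_of_hasCompactSupport
    hasCompactSupport_radialCutoff_one

lemma integrable_radialSlope_one : Integrable (radialSlope 1 1) :=
  (contDiff_radialSlope 1 1).continuous.integrable_of_hasCompactSupport
    hasCompactSupport_radialSlope_one

lemma integral_radialSlope_one_pos : 0 < ∫ x, radialSlope 1 1 x := by
  have hnonneg := radialSlope_nonneg (a := 1) zero_le_one
  refine (integral_nonneg hnonneg).lt_of_ne fun h => ?_
  have hslope : radialSlope 1 1 = 0 :=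
    (Continuous.ae_eq_iff_eq volume (contDiff_radialSlope 1 1).continuous continuous_const).mp
      ((integral_eq_zero_iff_of_nonneg hnonneg integrable_radialSlope_one).mp h.symm)
  have hconst := is_const_of_fderiv_eq_zero (𝕜 := ℝ)
    (differentiable_of_smooth (contDiff_radialCutoff 1 1)) (fun x => by
      ext w
      simp [fderiv_eq_sum_pd, pd_radialCutoff, hslope]) 0 (EuclideanSpace.single 0 1)
  rw [radialCutoff_eq_zero (x := EuclideanSpace.single 0 1) (by simp)] at hconst
  simp [radialCutoff] at hconst

/-- Convolution of `f` with the mollifier `radialSlope 1 1` dilated to scale `s`, which is not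
normalized to have integral `1`. -/
def mollify (s : ℝ) (f : R3 → ℝ) : R3 → ℝ := smear volume (radialSlope 1 1) (fun z => s • z) f

/-- Average over the scales `0 < t ≤ s`, with weight `t`, of the convolutions of `f` with the
dilates of `radialCutoff 1 1`. Up to a constant factor it is a Newtonian potential truncated at
distance `s`. -/
def truncatedPotential (s : ℝ) (f : R3 → ℝ) : R3 → ℝ :=
  smear ((volume.restrict (Set.Ioc 0 s)).prod volume)
    (fun q : ℝ × R3 => q.1 * radialCutoff 1 1 q.2) (fun q => q.1 • q.2) f

variable {f : R3 → ℝ} {r s : ℝ}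

lemma contDiff_comp_sub_smul (hf : ContDiff ℝ ∞ f) (x : R3) (t : ℝ) :
    ContDiff ℝ ∞ fun z => f (x - t • z) :=
  hf.comp (contDiff_const.sub (contDiff_id.const_smul t))

lemma pd_comp_sub_smul (hf : ContDiff ℝ ∞ f) (x : R3) (t : ℝ) (j : Fin 3) (z : R3) :
    pd (fun z => f (x - t • z)) j z = -t * pd f j (x - t • z) := by
  have haff : HasFDerivAt (fun z : R3 => x - t • z) (-(t • .id ℝ R3)) z :=
    ((hasFDerivAt_id z).const_smul t).const_sub x
  refine (pd_eq_of_hasFDerivAt ((differentiable_of_smooth hf _).hasFDerivAt.comp z haff) j).trans ?_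
  simp [pd]

lemma mul_smear_smul_pd {k : R3 → ℝ} (hk : ContDiff ℝ ∞ k) (hkc : HasCompactSupport k)
    (hf : ContDiff ℝ ∞ f) (t : ℝ) (j : Fin 3) (x : R3) :
    t * smear volume k (fun z => t • z) (pd f j) x =
      smear volume (pd k j) (fun z => t • z) f x := by
  have ibp := integral_mul_pd ((contDiff_comp_sub_smul hf x t).of_le (by simp))
    (hk.of_le (by simp)) hkc j
  simp only [pd_comp_sub_smul hf, mul_assoc, neg_mul, integral_neg, neg_neg,
    integral_const_mul] at ibp
  simp only [smear, smul_eq_mul, mul_comm (k _), mul_comm (pd k j _), ibp]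

lemma hasDerivAt_smear_smul {k : R3 → ℝ} (hk : Continuous k) (hkc : HasCompactSupport k)
    (hf : ContDiff ℝ ∞ f) (hc : HasCompactSupport f) (x : R3) (t : ℝ) :
    HasDerivAt (fun t => smear volume k (fun z => t • z) f x)
      (∫ z, k z * fderiv ℝ f (x - t • z) (-z)) t := by
  have hf' : Continuous (fderiv ℝ f) := hf.continuous_fderiv (by simp)
  obtain ⟨C, hC⟩ := (hc.fderiv ℝ).exists_bound_of_continuous hf'
  have hcont (τ : ℝ) : Continuous fun z => k z * f (x - τ • z) :=
    hk.mul (contDiff_comp_sub_smul hf x τ).continuous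
  have hline (z : R3) (τ : ℝ) :
      HasDerivAt (fun τ => k z * f (x - τ • z)) (k z * fderiv ℝ f (x - τ • z) (-z)) τ := by
    have hray : HasDerivAt (fun τ : ℝ => x - τ • z) (-z) τ := by
      simpa using ((hasDerivAt_id τ).smul_const z).const_sub x
    exact ((differentiable_of_smooth hf _).hasFDerivAt.comp_hasDerivAt τ hray).const_mul _
  refine (hasDerivAt_integral_of_dominated_loc_of_deriv_le (s := Set.univ)
    (bound := fun z => ‖k z‖ * (C * ‖z‖)) univ_mem
    (Eventually.of_forall fun τ => (hcont τ).aestronglyMeasurable)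
    ((hcont t).integrable_of_hasCompactSupport hkc.mul_right)
    (by fun_prop : Continuous fun z => k z * fderiv ℝ f (x - t • z) (-z)).aestronglyMeasurable
    (Eventually.of_forall fun z τ _ => ?_)
    ((by fun_prop : Continuous fun z => ‖k z‖ * (C * ‖z‖)).integrable_of_hasCompactSupport
      hkc.norm.mul_right)
    (Eventually.of_forall fun z τ _ => hline z τ)).2
  rw [norm_mul]
  gcongr
  simpa using (fderiv ℝ f (x - τ • z)).le_of_opNorm_le (hC _) (-z)

lemma hasDerivAt_smear_radialSlope_smul (hf : ContDiff ℝ ∞ f) (hc : HasCompactSupport f)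
    (x : R3) (t : ℝ) :
    HasDerivAt (fun t => smear volume (radialSlope 1 1) (fun z => t • z) f x)
      (t * smear volume (radialCutoff 1 1) (fun z => t • z) (lap f) x) t := by
  set ζ := radialCutoff 1 1
  have hζ : ContDiff ℝ ∞ ζ := contDiff_radialCutoff 1 1
  have hζc : HasCompactSupport ζ := hasCompactSupport_radialCutoff_one
  convert hasDerivAt_smear_smul (contDiff_radialSlope 1 1).continuous
    hasCompactSupport_radialSlope_one hf hc x t using 1
  have hinteg {k g : R3 → ℝ} (hk : Continuous k) (hkc : HasCompactSupport k)
      (hg : ContDiff ℝ ∞ g) : Integrable fun z => k z * g (x - t • z) :=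
    (hk.mul (contDiff_comp_sub_smul hg x t).continuous).integrable_of_hasCompactSupport
      hkc.mul_right
  calc t * smear volume ζ (fun z => t • z) (lap f) x
      = ∑ j, t * smear volume ζ (fun z => t • z) (pd (pd f j) j) x := by
        simp only [smear, lap, smul_eq_mul, Finset.mul_sum]
        rw [integral_finsetSum _ fun j _ =>
          hinteg hζ.continuous hζc (contDiff_pd (contDiff_pd hf j) j), Finset.mul_sum]
    _ = ∑ j, ∫ z, pd ζ j z * pd f j (x - t • z) :=
        Finset.sum_congr rfl fun j _ => mul_smear_smul_pd hζ hζc (contDiff_pd hf j) t j x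
    _ = ∫ z, ∑ j, pd ζ j z * pd f j (x - t • z) :=
        (integral_finsetSum _ fun j _ => hinteg (contDiff_pd hζ j).continuous
          (hasCompactSupport_pd hζc j) (contDiff_pd hf j)).symm
    _ = ∫ z, radialSlope 1 1 z * fderiv ℝ f (x - t • z) (-z) := by
        simp only [ζ, fderiv_eq_sum_pd, pd_radialCutoff, Finset.mul_sum, PiLp.neg_apply]
        exact integral_congr_ae (Eventually.of_forall fun z =>
          Finset.sum_congr rfl fun j _ => by ring)

lemma continuous_smear_smul {k g : R3 → ℝ} (hk : Continuous k) (hkc : HasCompactSupport k)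
    (hg : Continuous g) (x : R3) :
    Continuous fun t : ℝ => smear volume k (fun z => t • z) g x := by
  have hcont : Continuous (Function.uncurry fun (t : ℝ) z => k z * g (x - t • z)) :=
    (hk.comp continuous_snd).mul
      (hg.comp (continuous_const.sub (continuous_fst.smul continuous_snd)))
  refine (continuous_parametric_integral_of_continuous (μ := volume) hcont hkc).congr fun t => ?_
  exact setIntegral_eq_integral_of_forall_compl_eq_zero fun z hz => by
    simp [image_eq_zero_of_notMem_tsupport hz]

lemma integral_mul_smear_radialCutoff_smul (hf : ContDiff ℝ ∞ f) (hc : HasCompactSupport f)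
    (s : ℝ) (x : R3) :
    ∫ t in (0 : ℝ)..s, t * smear volume (radialCutoff 1 1) (fun z => t • z) (lap f) x =
      mollify s f x - (∫ z, radialSlope 1 1 z) * f x := by
  have hcont : Continuous fun t : ℝ =>
      t * smear volume (radialCutoff 1 1) (fun z => t • z) (lap f) x :=
    continuous_id.mul (continuous_smear_smul (contDiff_radialCutoff 1 1).continuous
      hasCompactSupport_radialCutoff_one (contDiff_lap hf).continuous x)
  rw [intervalIntegral.integral_eq_sub_of_hasDerivAt
    (fun t _ => hasDerivAt_smear_radialSlope_smul hf hc x t) (hcont.intervalIntegrable _ _)]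
  simp [mollify, smear, integral_mul_const]

lemma integrable_truncatedPotential_kernel (s : ℝ) :
    Integrable (fun q : ℝ × R3 => q.1 * radialCutoff 1 1 q.2)
      ((volume.restrict (Set.Ioc 0 s)).prod volume) :=
  .mul_prod (f := id) continuous_id.integrableOn_Ioc integrable_radialCutoff_one

lemma lap_truncatedPotential (hf : ContDiff ℝ ∞ f) (hc : HasCompactSupport f) (hs : 0 ≤ s)
    (x : R3) :
    lap (truncatedPotential s f) x = mollify s f x - (∫ z, radialSlope 1 1 z) * f x := by
  have hk := integrable_truncatedPotential_kernel s
  have hφ : Measurable fun q : ℝ × R3 => q.1 • q.2 := measurable_fst.smul measurable_snd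
  rw [← integral_mul_smear_radialCutoff_smul hf hc, intervalIntegral.integral_of_le hs,
    truncatedPotential, lap_smear hk hφ hf hc, smear, integral_prod _
      (integrable_smear hk hφ (contDiff_lap hf).continuous (hasCompactSupport_lap hc) x)]
  simp only [smear, smul_eq_mul, mul_assoc, integral_const_mul]

end Parametrix

section ParametrixBounds

variable {f k : R3 → ℝ} {r s : ℝ}

lemma memLp_two_of_smooth (hf : ContDiff ℝ ∞ f) (hc : HasCompactSupport f) : MemLp f 2 volume :=
  hf.continuous.memLp_of_hasCompactSupport hc

lemma norm_le_one_of_radialCutoff_ne_zero {z : R3} (hz : radialCutoff 1 1 z ≠ 0) :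
    ‖z‖ ≤ 1 := by
  by_contra h
  exact hz (radialCutoff_eq_zero (lt_one_mul_norm_sq (by simpa using h)).le)

lemma norm_le_one_of_radialSlope_ne_zero {z : R3} (hz : radialSlope 1 1 z ≠ 0) : ‖z‖ ≤ 1 := by
  by_contra h
  exact hz (radialSlope_eq_zero (lt_one_mul_norm_sq (by simpa using h)))

lemma contDiff_mollify (hf : ContDiff ℝ ∞ f) (hc : HasCompactSupport f) (s : ℝ) :
    ContDiff ℝ ∞ (mollify s f) :=
  contDiff_smear integrable_radialSlope_one (measurable_const_smul s) hf hc

lemma pd_mollify (hf : ContDiff ℝ ∞ f) (hc : HasCompactSupport f) (s : ℝ) (j : Fin 3) :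
    pd (mollify s f) j = mollify s (pd f j) :=
  pd_smear integrable_radialSlope_one (measurable_const_smul s) (hf.of_le (by simp)) hc j

lemma contDiff_truncatedPotential (hf : ContDiff ℝ ∞ f) (hc : HasCompactSupport f) (s : ℝ) :
    ContDiff ℝ ∞ (truncatedPotential s f) :=
  contDiff_smear (integrable_truncatedPotential_kernel s)
    (measurable_fst.smul measurable_snd) hf hc

lemma tsupport_mollify_subset (hs : 0 ≤ s) (hf : tsupport f ⊆ closedBall 0 r) :
    tsupport (mollify s f) ⊆ closedBall 0 (r + s) := by
  refine tsupport_smear_subset (Eventually.of_forall fun z hz => ?_) hf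
  rw [norm_smul, Real.norm_of_nonneg hs]
  exact mul_le_of_le_one_right hs (norm_le_one_of_radialSlope_ne_zero hz)

lemma tsupport_truncatedPotential_subset (hf : tsupport f ⊆ closedBall 0 r) :
    tsupport (truncatedPotential s f) ⊆ closedBall 0 (r + s) := by
  have hscale : ∀ᵐ q : ℝ × R3 ∂(volume.restrict (Set.Ioc 0 s)).prod volume, q.1 ∈ Set.Ioc 0 s :=
    Measure.quasiMeasurePreserving_fst.ae (ae_restrict_mem measurableSet_Ioc)
  refine tsupport_smear_subset ?_ hf
  filter_upwards [hscale] with q hq hk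
  rw [norm_smul, Real.norm_of_nonneg hq.1.le]
  exact (mul_le_of_le_one_right hq.1.le
    (norm_le_one_of_radialCutoff_ne_zero (right_ne_zero_of_mul hk))).trans hq.2

lemma lpNorm_mollify_le (hf : ContDiff ℝ ∞ f) (hc : HasCompactSupport f) (s : ℝ) :
    lpNorm (mollify s f) 2 volume ≤ (∫ z, radialSlope 1 1 z) * lpNorm f 2 volume := by
  refine (lpNorm_two_smear_le (contDiff_radialSlope 1 1).continuous.measurable
    integrable_radialSlope_one (measurable_const_smul s) hf.continuous
    (memLp_two_of_smooth hf hc)).trans_eq ?_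
  simp only [abs_of_nonneg (radialSlope_nonneg zero_le_one _)]

lemma lpNorm_lap_truncatedPotential_le (hf : ContDiff ℝ ∞ f) (hc : HasCompactSupport f)
    (hs : 0 ≤ s) : lpNorm (lap (truncatedPotential s f)) 2 volume ≤
      2 * (∫ z, radialSlope 1 1 z) * lpNorm f 2 volume := by
  set c₀ := ∫ z, radialSlope 1 1 z
  have hc₀ : 0 ≤ c₀ := integral_radialSlope_one_pos.le
  have hlap : lap (truncatedPotential s f) = mollify s f - c₀ • f :=
    funext fun x => lap_truncatedPotential hf hc hs x
  have hmoll : MemLp (mollify s f) 2 volume := by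
    obtain ⟨R, hR⟩ := hc.isBounded.subset_closedBall 0
    exact memLp_two_of_smooth (contDiff_mollify hf hc s)
      (hasCompactSupport_of_tsupport_subset_closedBall (tsupport_mollify_subset hs hR))
  calc lpNorm (lap (truncatedPotential s f)) 2 volume
      ≤ lpNorm (mollify s f) 2 volume + lpNorm (c₀ • f) 2 volume :=
        hlap ▸ lpNorm_sub_le hmoll one_le_two
    _ ≤ c₀ * lpNorm f 2 volume + c₀ * lpNorm f 2 volume := by
        gcongr
        · exact lpNorm_mollify_le hf hc s
        · rw [lpNorm_const_smul, coe_nnnorm, Real.norm_of_nonneg hc₀]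
    _ = 2 * c₀ * lpNorm f 2 volume := by ring

lemma lpNorm_smear_smul_le (hk : ContDiff ℝ ∞ k) (hkc : HasCompactSupport k)
    (hf : ContDiff ℝ ∞ f) (hc : HasCompactSupport f) (s : ℝ) :
    lpNorm (smear volume k (fun z => s • z) f) 2 volume ≤
      (∫ z, |k z|) * lpNorm f 2 volume :=
  lpNorm_two_smear_le hk.continuous.measurable
    (hk.continuous.integrable_of_hasCompactSupport hkc) (measurable_const_smul s) hf.continuous
    (memLp_two_of_smooth hf hc)

lemma lpNorm_pd_mollify_le (hf : ContDiff ℝ ∞ f) (hc : HasCompactSupport f) (hs : 0 < s)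
    (j : Fin 3) : lpNorm (pd (mollify s f) j) 2 volume ≤
      s⁻¹ * ((∑ i, ∫ z, |pd (radialSlope 1 1) i z|) * lpNorm f 2 volume) := by
  have hη := contDiff_radialSlope 1 1
  have hηc := hasCompactSupport_radialSlope_one
  have hpd : pd (mollify s f) j =
      s⁻¹ • smear volume (pd (radialSlope 1 1) j) (fun z => s • z) f := by
    ext x
    rw [pd_mollify hf hc, Pi.smul_apply, smul_eq_mul, ← mul_smear_smul_pd hη hηc hf,
      inv_mul_cancel_left₀ hs.ne']
    rfl
  rw [hpd, lpNorm_const_smul, coe_nnnorm, Real.norm_of_nonneg (inv_nonneg.mpr hs.le)]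
  gcongr
  refine (lpNorm_smear_smul_le (contDiff_pd hη j) (hasCompactSupport_pd hηc j) hf hc s).trans ?_
  refine mul_le_mul_of_nonneg_right ?_ lpNorm_nonneg
  exact Finset.single_le_sum (f := fun i => ∫ z, |pd (radialSlope 1 1) i z|)
    (fun i _ => integral_nonneg fun z => abs_nonneg _) (Finset.mem_univ j)

lemma lpNorm_lap_mollify_le (hf : ContDiff ℝ ∞ f) (hc : HasCompactSupport f) (hs : 0 < s) :
    lpNorm (lap (mollify s f)) 2 volume ≤
      s⁻¹ ^ 2 * ((∫ z, |lap (radialSlope 1 1) z|) * lpNorm f 2 volume) := by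
  have hη := contDiff_radialSlope 1 1
  have hηc := hasCompactSupport_radialSlope_one
  have hpd (j : Fin 3) (x : R3) :
      s ^ 2 * smear volume (radialSlope 1 1) (fun z => s • z) (pd (pd f j) j) x =
        smear volume (pd (pd (radialSlope 1 1) j) j) (fun z => s • z) f x := by
    rw [sq, mul_assoc, mul_smear_smul_pd hη hηc (contDiff_pd hf j),
      mul_smear_smul_pd (contDiff_pd hη j) (hasCompactSupport_pd hηc j) hf]
  have hlap : lap (mollify s f) =
      s⁻¹ ^ 2 • smear volume (lap (radialSlope 1 1)) (fun z => s • z) f := by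
    ext x
    have hsum : smear volume (lap (radialSlope 1 1)) (fun z => s • z) f x =
        ∑ j, smear volume (pd (pd (radialSlope 1 1) j) j) (fun z => s • z) f x := by
      simp only [smear, lap, Finset.sum_smul]
      exact integral_finsetSum _ fun j _ => integrable_smear
        ((contDiff_pd (contDiff_pd hη j) j).continuous.integrable_of_hasCompactSupport
          (hasCompactSupport_pd (hasCompactSupport_pd hηc j) j))
        (measurable_const_smul s) hf.continuous hc x
    simp only [Pi.smul_apply, smul_eq_mul, hsum, ← hpd, ← Finset.mul_sum]
    rw [← mul_assoc, ← mul_pow, inv_mul_cancel₀ hs.ne', one_pow, one_mul]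
    simp only [lap, pd_mollify hf hc, pd_mollify (contDiff_pd hf _) (hasCompactSupport_pd hc _)]
    rfl
  rw [hlap, lpNorm_const_smul, coe_nnnorm, Real.norm_of_nonneg (by positivity)]
  gcongr
  exact lpNorm_smear_smul_le (contDiff_lap hη) (hasCompactSupport_lap hηc) hf hc s

end ParametrixBounds

section Hessian

variable {f g : R3 → ℝ}

lemma integrable_mul_of_hasCompactSupport (hf : Continuous f) (hg : Continuous g)
    (hc : HasCompactSupport g) : Integrable fun x => f x * g x :=
  (hf.mul hg).integrable_of_hasCompactSupport hc.mul_left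

lemma integral_pd_pd_mul_pd_pd (hf : ContDiff ℝ ∞ f) (hc : HasCompactSupport f) (i j : Fin 3) :
    ∫ x, pd (pd f i) i x * pd (pd f j) j x = ∫ x, pd (pd f i) j x ^ 2 := by
  have hi := contDiff_pd hf i
  have hj := contDiff_pd hf j
  rw [integral_mul_pd ((contDiff_pd hi i).of_le (by simp)) (hj.of_le (by simp))
    (hasCompactSupport_pd hc j), pd_pd_comm hi i j,
    ← integral_mul_pd ((contDiff_pd hi j).of_le (by simp)) (hj.of_le (by simp))
    (hasCompactSupport_pd hc j), pd_pd_comm hf j i]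
  simp only [sq]

lemma integral_lap_sq (hf : ContDiff ℝ ∞ f) (hc : HasCompactSupport f) :
    ∫ x, lap f x ^ 2 = ∑ i, ∑ j, ∫ x, pd (pd f i) j x ^ 2 := by
  have hinteg (i j : Fin 3) : Integrable fun x => pd (pd f i) i x * pd (pd f j) j x :=
    integrable_mul_of_hasCompactSupport (contDiff_pd (contDiff_pd hf i) i).continuous
      (contDiff_pd (contDiff_pd hf j) j).continuous
      (hasCompactSupport_pd (hasCompactSupport_pd hc j) j)
  simp only [lap, sq, Finset.sum_mul_sum]
  rw [integral_finsetSum _ fun i _ => integrable_finsetSum _ fun j _ => hinteg i j]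
  simp only [integral_finsetSum _ fun j _ => hinteg _ j, integral_pd_pd_mul_pd_pd hf hc, sq]

lemma lpNorm_pd_pd_le_lpNorm_lap (hf : ContDiff ℝ ∞ f) (hc : HasCompactSupport f) (i j : Fin 3) :
    lpNorm (pd (pd f i) j) 2 volume ≤ lpNorm (lap f) 2 volume := by
  rw [lpNorm_two_eq_sqrt_integral
      (contDiff_pd (contDiff_pd hf i) j).continuous.aestronglyMeasurable,
    lpNorm_two_eq_sqrt_integral (contDiff_lap hf).continuous.aestronglyMeasurable,
    integral_lap_sq hf hc]
  refine Real.sqrt_le_sqrt ?_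
  have hnonneg (a b : Fin 3) : 0 ≤ ∫ x, pd (pd f a) b x ^ 2 :=
    integral_nonneg fun x => sq_nonneg _
  exact (Finset.single_le_sum (fun b _ => hnonneg i b) (Finset.mem_univ j)).trans
    (Finset.single_le_sum (f := fun a => ∑ b, ∫ x, pd (pd f a) b x ^ 2)
      (fun a _ => Finset.sum_nonneg fun b _ => hnonneg a b) (Finset.mem_univ i))

lemma integral_lap_mul (hf : ContDiff ℝ ∞ f) (hg : ContDiff ℝ ∞ g) (hc : HasCompactSupport g) :
    ∫ x, lap f x * g x = ∫ x, f x * lap g x := by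
  have hpd {h : R3 → ℝ} (hh : ContDiff ℝ ∞ h) (j : Fin 3) : ContDiff ℝ ∞ (pd (pd h j) j) :=
    contDiff_pd (contDiff_pd hh j) j
  simp only [lap, Finset.sum_mul, Finset.mul_sum]
  rw [integral_finsetSum _ fun j _ => integrable_mul_of_hasCompactSupport (hpd hf j).continuous
      hg.continuous hc, integral_finsetSum _ fun j _ => integrable_mul_of_hasCompactSupport
      hf.continuous (hpd hg j).continuous (hasCompactSupport_pd (hasCompactSupport_pd hc j) j)]
  refine Finset.sum_congr rfl fun j _ => ?_
  rw [integral_mul_pd (hf.of_le (by simp)) ((contDiff_pd hg j).of_le (by simp))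
      (hasCompactSupport_pd hc j),
    integral_mul_pd ((contDiff_pd hf j).of_le (by simp)) (hg.of_le (by simp)) hc, neg_neg]

lemma abs_integral_mul_le_of_tsupport_subset {r : ℝ} (hf : Continuous f) (hg : Continuous g)
    (hr : tsupport g ⊆ closedBall 0 r) :
    |∫ x, f x * g x| ≤ lpNorm f 2 (volume.restrict (closedBall 0 r)) * lpNorm g 2 volume := by
  have hg2 : MemLp g 2 volume :=
    hg.memLp_of_hasCompactSupport (hasCompactSupport_of_tsupport_subset_closedBall hr)
  have hf2 : MemLp f 2 (volume.restrict (closedBall 0 r)) :=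
    (memLp_two_iff_integrable_sq hf.aestronglyMeasurable).mpr
      ((hf.pow 2).continuousOn.integrableOn_compact (isCompact_closedBall 0 r))
  rw [← setIntegral_eq_integral_of_forall_compl_eq_zero (s := closedBall 0 r) fun x hx => by
    rw [image_eq_zero_of_notMem_tsupport fun h => hx (hr h), mul_zero]]
  have hg2r := hg2.restrict (closedBall 0 r)
  refine (abs_integral_mul_le_lpNorm_mul_lpNorm hf2 hg2r).trans ?_
  refine mul_le_mul_of_nonneg_left ?_ lpNorm_nonneg
  rw [← toReal_eLpNorm hg2r.1, ← toReal_eLpNorm hg2.1]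
  exact ENNReal.toReal_mono hg2.2.ne (eLpNorm_mono_measure g Measure.restrict_le_self)

end Hessian

section Divergence

/-- Divergence of the vector field with components `X i`. -/
def divergence (X : Fin 3 → R3 → ℝ) (x : R3) : ℝ := ∑ i, pd (X i) i x

variable {X : Fin 3 → R3 → ℝ} {f : R3 → ℝ} {r : ℝ}

lemma contDiff_divergence (hX : ∀ i, ContDiff ℝ ∞ (X i)) : ContDiff ℝ ∞ (divergence X) :=
  ContDiff.sum fun i _ => contDiff_pd (hX i) i

lemma tsupport_divergence_subset (hX : ∀ i, tsupport (X i) ⊆ closedBall 0 r) :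
    tsupport (divergence X) ⊆ closedBall 0 r := by
  refine closure_minimal (fun x hx => ?_) isClosed_closedBall
  obtain ⟨i, -, hi⟩ := Finset.exists_ne_zero_of_sum_ne_zero hx
  exact hX i (tsupport_pd_subset _ i (subset_tsupport _ hi))

lemma divergence_mollify (hX : ∀ i, ContDiff ℝ ∞ (X i)) (hc : ∀ i, HasCompactSupport (X i))
    (s : ℝ) : divergence (fun i => mollify s (X i)) = mollify s (divergence X) := by
  ext x
  simp only [divergence, pd_mollify (hX _) (hc _)]
  simp only [mollify, smear, divergence, Finset.smul_sum]
  exact (integral_finsetSum _ fun i _ => integrable_smear integrable_radialSlope_one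
    (measurable_const_smul s) (contDiff_pd (hX i) i).continuous (hasCompactSupport_pd (hc i) i)
    x).symm

lemma integral_mul_divergence (hf : ContDiff ℝ ∞ f) (hX : ∀ i, ContDiff ℝ ∞ (X i))
    (hc : ∀ i, HasCompactSupport (X i)) :
    ∫ x, f x * divergence X x = -∑ i, ∫ x, pd f i x * X i x := by
  simp only [divergence, Finset.mul_sum]
  rw [integral_finsetSum _ fun i _ => integrable_mul_of_hasCompactSupport hf.continuous
    (contDiff_pd (hX i) i).continuous (hasCompactSupport_pd (hc i) i), ← Finset.sum_neg_distrib]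
  exact Finset.sum_congr rfl fun i _ =>
    integral_mul_pd (hf.of_le (by simp)) ((hX i).of_le (by simp)) (hc i) i

lemma integral_divergence_mul (hX : ∀ i, ContDiff ℝ ∞ (X i)) (hf : ContDiff ℝ ∞ f)
    (hc : HasCompactSupport f) :
    ∫ x, divergence X x * f x = -∑ i, ∫ x, X i x * pd f i x := by
  simp only [divergence, Finset.sum_mul]
  rw [integral_finsetSum _ fun i _ => integrable_mul_of_hasCompactSupport
    (contDiff_pd (hX i) i).continuous hf.continuous hc, ← Finset.sum_neg_distrib]
  refine Finset.sum_congr rfl fun i _ => ?_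
  rw [integral_mul_pd ((hX i).of_le (by simp)) (hf.of_le (by simp)) hc, neg_neg]

end Divergence

section Pressure

/-- The smooth fields `u`, `P` solve the stationary Stokes system `-Δu + ∇P + div F = 0`,
`div u = 0` with stress tensor `F`, where `(div F)_i = ∑ⱼ ∂ⱼ F_ij`. -/
structure StokesSystem (u : Fin 3 → R3 → ℝ) (P : R3 → ℝ) (F : Fin 3 → Fin 3 → R3 → ℝ) :
    Prop where
  contDiff_velocity : ∀ i, ContDiff ℝ ∞ (u i)
  contDiff_pressure : ContDiff ℝ ∞ P
  contDiff_stress : ∀ i j, ContDiff ℝ ∞ (F i j)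
  momentum : ∀ i x, pd P i x = lap (u i) x - divergence (F i) x
  divergence_free : ∀ x, divergence u x = 0

variable {u : Fin 3 → R3 → ℝ} {P : R3 → ℝ} {F : Fin 3 → Fin 3 → R3 → ℝ} {r s M M' A B : ℝ}

lemma StokesSystem.integral_pressure_mul_divergence (h : StokesSystem u P F)
    {Z : Fin 3 → R3 → ℝ} (hZ : ∀ i, ContDiff ℝ ∞ (Z i)) (hc : ∀ i, HasCompactSupport (Z i)) :
    ∫ x, P x * divergence Z x =
      -(∑ i, ∫ x, u i x * lap (Z i) x) - ∑ i, ∑ j, ∫ x, F i j x * pd (Z i) j x := by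
  rw [integral_mul_divergence h.contDiff_pressure hZ hc, ← Finset.sum_neg_distrib,
    ← Finset.sum_neg_distrib, ← Finset.sum_sub_distrib]
  refine Finset.sum_congr rfl fun i _ => ?_
  simp only [h.momentum, sub_mul]
  rw [integral_sub
    (integrable_mul_of_hasCompactSupport (contDiff_lap (h.contDiff_velocity i)).continuous
      (hZ i).continuous (hc i))
    (integrable_mul_of_hasCompactSupport (contDiff_divergence (h.contDiff_stress i)).continuous
      (hZ i).continuous (hc i)),
    integral_lap_mul (h.contDiff_velocity i) (hZ i) (hc i),
    integral_divergence_mul (h.contDiff_stress i) (hZ i) (hc i)]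
  ring

lemma StokesSystem.integral_pressure_mul_lap (h : StokesSystem u P F) {g : R3 → ℝ}
    (hg : ContDiff ℝ ∞ g) (hc : HasCompactSupport g) :
    ∫ x, P x * lap g x = -∑ i, ∑ j, ∫ x, F i j x * pd (pd g i) j x := by
  have hvelocity : ∑ i, ∫ x, u i x * lap (pd g i) x = 0 := by
    have hdiv := integral_divergence_mul h.contDiff_velocity (contDiff_lap hg)
      (hasCompactSupport_lap hc)
    simp only [h.divergence_free, zero_mul, integral_zero, zero_eq_neg] at hdiv
    simpa only [lap_pd hg] using hdiv
  have htest := h.integral_pressure_mul_divergence (contDiff_pd hg) (hasCompactSupport_pd hc)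
  rwa [hvelocity, neg_zero, zero_sub] at htest

lemma abs_sum_fin_three_le {f : Fin 3 → ℝ} {c : ℝ} (h : ∀ i, |f i| ≤ c) : |∑ i, f i| ≤ 3 * c := by
  simpa using (Finset.abs_sum_le_sum_abs f Finset.univ).trans
    (Finset.sum_le_card_nsmul _ _ c fun i _ => h i)

lemma StokesSystem.abs_integral_pressure_mul_lap_le (h : StokesSystem u P F)
    (hF : ∀ i j, lpNorm (F i j) 2 (volume.restrict (closedBall 0 r)) ≤ M) {g : R3 → ℝ}
    (hg : ContDiff ℝ ∞ g) (hr : tsupport g ⊆ closedBall 0 r) :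
    |∫ x, P x * lap g x| ≤ 9 * (M * lpNorm (lap g) 2 volume) := by
  have hc := hasCompactSupport_of_tsupport_subset_closedBall hr
  rw [h.integral_pressure_mul_lap hg hc, abs_neg]
  refine (abs_sum_fin_three_le fun i => abs_sum_fin_three_le fun j => ?_).trans_eq
    (by ring : 3 * (3 * (M * lpNorm (lap g) 2 volume)) = _)
  refine (abs_integral_mul_le_of_tsupport_subset (h.contDiff_stress i j).continuous
    (contDiff_pd (contDiff_pd hg i) j).continuous
    ((tsupport_pd_subset _ j).trans ((tsupport_pd_subset _ i).trans hr))).trans ?_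
  exact mul_le_mul (hF i j) (lpNorm_pd_pd_le_lpNorm_lap hg hc i j) lpNorm_nonneg
    (lpNorm_nonneg.trans (hF i j))

lemma StokesSystem.abs_integral_pressure_mul_divergence_le_of_bounds (h : StokesSystem u P F)
    (hF : ∀ i j, lpNorm (F i j) 2 (volume.restrict (closedBall 0 r)) ≤ M)
    (hu : ∀ i, lpNorm (u i) 2 (volume.restrict (closedBall 0 r)) ≤ M')
    {Z : Fin 3 → R3 → ℝ} (hZ : ∀ i, ContDiff ℝ ∞ (Z i)) (hr : ∀ i, tsupport (Z i) ⊆ closedBall 0 r)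
    (hpd : ∀ i j, lpNorm (pd (Z i) j) 2 volume ≤ A) (hlap : ∀ i, lpNorm (lap (Z i)) 2 volume ≤ B) :
    |∫ x, P x * divergence Z x| ≤ 9 * (M * A) + 3 * (M' * B) := by
  rw [h.integral_pressure_mul_divergence hZ fun i =>
    hasCompactSupport_of_tsupport_subset_closedBall (hr i)]
  have hvelocity : |∑ i, ∫ x, u i x * lap (Z i) x| ≤ 3 * (M' * B) := by
    refine abs_sum_fin_three_le fun i => (abs_integral_mul_le_of_tsupport_subset
      (h.contDiff_velocity i).continuous (contDiff_lap (hZ i)).continuous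
      ((tsupport_lap_subset _).trans (hr i))).trans ?_
    exact mul_le_mul (hu i) (hlap i) lpNorm_nonneg (lpNorm_nonneg.trans (hu i))
  have hstress : |∑ i, ∑ j, ∫ x, F i j x * pd (Z i) j x| ≤ 3 * (3 * (M * A)) := by
    refine abs_sum_fin_three_le fun i => abs_sum_fin_three_le fun j =>
      (abs_integral_mul_le_of_tsupport_subset (h.contDiff_stress i j).continuous
        (contDiff_pd (hZ i) j).continuous ((tsupport_pd_subset _ j).trans (hr i))).trans ?_
    exact mul_le_mul (hF i j) (hpd i j) lpNorm_nonneg (lpNorm_nonneg.trans (hF i j))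
  refine (abs_sub _ _).trans ?_
  rw [abs_neg]
  linarith

/-- The constant of the local pressure estimate
`StokesSystem.abs_integral_pressure_mul_divergence_le`. -/
def pressureConst : ℝ :=
  (∫ z, radialSlope 1 1 z)⁻¹ * (18 * (∫ z, radialSlope 1 1 z) +
    9 * (∑ i, ∫ z, |pd (radialSlope 1 1) i z|) + 3 * ∫ z, |lap (radialSlope 1 1) z|)

lemma pressureConst_nonneg : 0 ≤ pressureConst := by
  have hc₀ := integral_radialSlope_one_pos
  have : 0 ≤ ∑ i, ∫ z, |pd (radialSlope 1 1) i z| :=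
    Finset.sum_nonneg fun i _ => integral_nonneg fun z => abs_nonneg _
  have : 0 ≤ ∫ z, |lap (radialSlope 1 1) z| := integral_nonneg fun z => abs_nonneg _
  unfold pressureConst
  positivity

lemma integral_pressure_mul_eq {X : Fin 3 → R3 → ℝ} (hP : Continuous P)
    (hX : ∀ i, ContDiff ℝ ∞ (X i)) (hr : ∀ i, tsupport (X i) ⊆ closedBall 0 r) (hs : 0 ≤ s) :
    (∫ z, radialSlope 1 1 z) * ∫ x, P x * divergence X x =
      (∫ x, P x * divergence (fun i => mollify s (X i)) x) -
        ∫ x, P x * lap (truncatedPotential s (divergence X)) x := by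
  have hXc (i : Fin 3) := hasCompactSupport_of_tsupport_subset_closedBall (hr i)
  have hdiv := contDiff_divergence hX
  have hdivr := tsupport_divergence_subset hr
  have hdivc := hasCompactSupport_of_tsupport_subset_closedBall hdivr
  rw [divergence_mollify hX hXc, ← integral_const_mul, ← integral_sub
    (integrable_mul_of_hasCompactSupport hP (contDiff_mollify hdiv hdivc s).continuous
      (hasCompactSupport_of_tsupport_subset_closedBall (tsupport_mollify_subset hs hdivr)))
    (integrable_mul_of_hasCompactSupport hP
      (contDiff_lap (contDiff_truncatedPotential hdiv hdivc s)).continuous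
      (hasCompactSupport_lap (hasCompactSupport_of_tsupport_subset_closedBall
        (tsupport_truncatedPotential_subset hdivr))))]
  simp only [lap_truncatedPotential hdiv hdivc hs]
  exact integral_congr_ae (Eventually.of_forall fun x => by ring)

lemma StokesSystem.abs_integral_pressure_mul_lap_truncatedPotential_le (h : StokesSystem u P F)
    (hs : 0 ≤ s) (hF : ∀ i j, lpNorm (F i j) 2 (volume.restrict (closedBall 0 (r + s))) ≤ M)
    {f : R3 → ℝ} (hf : ContDiff ℝ ∞ f) (hr : tsupport f ⊆ closedBall 0 r) :
    |∫ x, P x * lap (truncatedPotential s f) x| ≤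
      9 * (M * (2 * (∫ z, radialSlope 1 1 z) * lpNorm f 2 volume)) := by
  have hc := hasCompactSupport_of_tsupport_subset_closedBall hr
  have hM : 0 ≤ M := lpNorm_nonneg.trans (hF 0 0)
  refine (h.abs_integral_pressure_mul_lap_le hF (contDiff_truncatedPotential hf hc s)
    (tsupport_truncatedPotential_subset hr)).trans ?_
  gcongr
  exact lpNorm_lap_truncatedPotential_le hf hc hs

lemma StokesSystem.abs_integral_pressure_mul_divergence_mollify_le (h : StokesSystem u P F)
    (hs : 0 < s) (hF : ∀ i j, lpNorm (F i j) 2 (volume.restrict (closedBall 0 (r + s))) ≤ M)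
    (hu : ∀ i, lpNorm (u i) 2 (volume.restrict (closedBall 0 (r + s))) ≤ M')
    {X : Fin 3 → R3 → ℝ} (hX : ∀ i, ContDiff ℝ ∞ (X i)) (hr : ∀ i, tsupport (X i) ⊆ closedBall 0 r)
    (hA : ∀ i, lpNorm (X i) 2 volume ≤ A) :
    |∫ x, P x * divergence (fun i => mollify s (X i)) x| ≤
      9 * (M * (s⁻¹ * ((∑ i, ∫ z, |pd (radialSlope 1 1) i z|) * A))) +
        3 * (M' * (s⁻¹ ^ 2 * ((∫ z, |lap (radialSlope 1 1) z|) * A))) := by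
  have hc (i : Fin 3) := hasCompactSupport_of_tsupport_subset_closedBall (hr i)
  refine h.abs_integral_pressure_mul_divergence_le_of_bounds hF hu
    (fun i => contDiff_mollify (hX i) (hc i) s) (fun i => tsupport_mollify_subset hs.le (hr i))
    (fun i j => (lpNorm_pd_mollify_le (hX i) (hc i) hs j).trans ?_)
    (fun i => (lpNorm_lap_mollify_le (hX i) (hc i) hs).trans ?_)
  all_goals gcongr; exact hA i

/-- The pressure is controlled by `F` and `u` alone: a divergence `div X` is the Laplacian of a
truncated potential, which after integration by parts no longer sees `u` because `div u = 0`, plus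
a mollification at scale `s`, on which all derivatives may be put. -/
lemma StokesSystem.abs_integral_pressure_mul_divergence_le (h : StokesSystem u P F) (hs : 0 < s)
    (hF : ∀ i j, lpNorm (F i j) 2 (volume.restrict (closedBall 0 (r + s))) ≤ M)
    (hu : ∀ i, lpNorm (u i) 2 (volume.restrict (closedBall 0 (r + s))) ≤ M')
    {X : Fin 3 → R3 → ℝ} (hX : ∀ i, ContDiff ℝ ∞ (X i)) (hr : ∀ i, tsupport (X i) ⊆ closedBall 0 r)
    (hA : ∀ i, lpNorm (X i) 2 volume ≤ A) (hB : lpNorm (divergence X) 2 volume ≤ B) :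
    |∫ x, P x * divergence X x| ≤ pressureConst * (M * (B + s⁻¹ * A) + M' * (s⁻¹ ^ 2 * A)) := by
  have hpotential := h.abs_integral_pressure_mul_lap_truncatedPotential_le hs.le hF
    (contDiff_divergence hX) (tsupport_divergence_subset hr)
  have hmollified := h.abs_integral_pressure_mul_divergence_mollify_le hs hF hu hX hr hA
  have hsplit := integral_pressure_mul_eq h.contDiff_pressure.continuous hX hr hs.le
  have hM : 0 ≤ M := lpNorm_nonneg.trans (hF 0 0)
  have hM' : 0 ≤ M' := lpNorm_nonneg.trans (hu 0)
  have hA₀ : 0 ≤ A := lpNorm_nonneg.trans (hA 0)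
  have hB₀ : 0 ≤ B := lpNorm_nonneg.trans hB
  have hc₁ : 0 ≤ ∑ i, ∫ z, |pd (radialSlope 1 1) i z| :=
    Finset.sum_nonneg fun i _ => integral_nonneg fun z => abs_nonneg _
  have hc₂ : 0 ≤ ∫ z, |lap (radialSlope 1 1) z| := integral_nonneg fun z => abs_nonneg _
  have hc₀ := integral_radialSlope_one_pos
  rw [pressureConst]
  set c₀ := ∫ z, radialSlope 1 1 z
  set c₁ := ∑ i, ∫ z, |pd (radialSlope 1 1) i z|
  set c₂ := ∫ z, |lap (radialSlope 1 1) z|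
  rw [mul_assoc, ← div_eq_inv_mul, le_div_iff₀' hc₀]
  have hscaled : c₀ * |∫ x, P x * divergence X x| ≤
      9 * (M * (s⁻¹ * (c₁ * A))) + 3 * (M' * (s⁻¹ ^ 2 * (c₂ * A))) + 9 * (M * (2 * c₀ * B)) := by
    rw [← abs_of_pos hc₀, ← abs_mul, abs_of_pos hc₀, hsplit]
    exact (abs_sub _ _).trans (add_le_add hmollified (hpotential.trans (by gcongr)))
  have h₁ : 0 ≤ M * B * (9 * c₁ + 3 * c₂) := by positivity
  have h₂ : 0 ≤ M * (s⁻¹ * A) * (18 * c₀ + 3 * c₂) := by positivity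
  have h₃ : 0 ≤ M' * (s⁻¹ ^ 2 * A) * (18 * c₀ + 9 * c₁) := by positivity
  linarith

end Pressure

section Cutoff

lemma deriv_smoothTransition_eq_zero_of_one_lt {t : ℝ} (ht : 1 < t) :
    deriv Real.smoothTransition t = 0 := by
  have hloc : Real.smoothTransition =ᶠ[nhds t] fun _ => 1 := by
    filter_upwards [Ioi_mem_nhds ht] with y hy
    exact Real.smoothTransition.one_of_one_le (Set.mem_Ioi.mp hy).le
  rw [hloc.deriv_eq, deriv_const]

lemma exists_abs_deriv_smoothTransition_le :
    ∃ C, 0 ≤ C ∧ ∀ t, |deriv Real.smoothTransition t| ≤ C ∧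
      |deriv (deriv Real.smoothTransition) t| ≤ C := by
  have hc : HasCompactSupport (deriv Real.smoothTransition) :=
    HasCompactSupport.intro (isCompact_Icc (a := 0) (b := 1)) fun t ht => by
      rcases not_and_or.mp ht with h | h
      · exact deriv_smoothTransition_eq_zero_of_neg (not_le.mp h)
      · exact deriv_smoothTransition_eq_zero_of_one_lt (not_le.mp h)
  have hsmooth := contDiff_deriv_smoothTransition
  obtain ⟨C₁, h₁⟩ := hc.exists_bound_of_continuous hsmooth.continuous
  obtain ⟨C₂, h₂⟩ := hc.deriv.exists_bound_of_continuous
    (contDiff_infty_iff_deriv.mp hsmooth).2.continuous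
  exact ⟨max C₁ C₂, (norm_nonneg _).trans ((h₁ 0).trans (le_max_left _ _)), fun t =>
    ⟨(h₁ t).trans (le_max_left _ _), (h₂ t).trans (le_max_right _ _)⟩⟩

lemma lap_radialCutoff (a b : ℝ) (x : R3) :
    lap (radialCutoff a b) x =
      4 * b ^ 2 * ‖x‖ ^ 2 * deriv (deriv Real.smoothTransition) (a - b * ‖x‖ ^ 2) -
        6 * b * deriv Real.smoothTransition (a - b * ‖x‖ ^ 2) := by
  have hcoord (j : Fin 3) : HasFDerivAt (fun y : R3 => -y j)
      (-(EuclideanSpace.proj j : R3 →L[ℝ] ℝ)) x :=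
    (EuclideanSpace.proj j : R3 →L[ℝ] ℝ).hasFDerivAt.neg
  have hterm (j : Fin 3) : pd (pd (radialCutoff a b) j) j x =
      4 * b ^ 2 * x j ^ 2 * deriv (deriv Real.smoothTransition) (a - b * ‖x‖ ^ 2) -
        2 * b * deriv Real.smoothTransition (a - b * ‖x‖ ^ 2) := by
    have hpd : pd (radialCutoff a b) j = fun y => -y j * radialSlope a b y := by
      ext y
      rw [pd_radialCutoff, neg_mul]
    have hslope : pd (radialSlope a b) j x =
        2 * b * -(x j * (2 * b * deriv (deriv Real.smoothTransition) (a - b * ‖x‖ ^ 2))) := by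
      rw [← pd_comp_sub_mul_norm_sq (contDiff_deriv_smoothTransition.differentiable (by simp)),
        ← pd_const_mul]
      · rfl
      · exact ((contDiff_deriv_smoothTransition.comp (contDiff_const.sub
          (contDiff_const.mul (contDiff_norm_sq ℝ)))).differentiable (by simp)).differentiableAt
    rw [hpd, pd_fun_mul (hcoord j).differentiableAt
      (differentiable_of_smooth (contDiff_radialSlope a b)).differentiableAt, hslope,
      pd_eq_of_hasFDerivAt (hcoord j)]
    simp [radialSlope]
    ring
  simp only [lap, hterm, EuclideanSpace.real_norm_sq_eq, Fin.sum_univ_three]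
  ring

/-- `φ` is a smooth function with values in `[0, 1]`, equal to `1` on the ball of radius `ρ`,
supported in the ball of radius `ρ + s`, and with derivatives of the size `C` dictated by
scaling. -/
structure IsCutoff (C ρ s : ℝ) (φ : R3 → ℝ) : Prop where
  contDiff : ContDiff ℝ ∞ φ
  tsupport_subset : tsupport φ ⊆ closedBall 0 (ρ + s)
  nonneg : ∀ x, 0 ≤ φ x
  le_one : ∀ x, φ x ≤ 1
  eq_one : ∀ x ∈ closedBall 0 ρ, φ x = 1
  abs_pd_le : ∀ j x, |pd φ j x| ≤ C * s⁻¹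
  abs_lap_le : ∀ x, |lap φ x| ≤ C * s⁻¹ ^ 2

lemma IsCutoff.hasCompactSupport {C ρ s : ℝ} {φ : R3 → ℝ} (hφ : IsCutoff C ρ s φ) :
    HasCompactSupport φ :=
  hasCompactSupport_of_tsupport_subset_closedBall hφ.tsupport_subset

section Bounds

variable {a b C R ρ s : ℝ} {x : R3}
lemma abs_pd_radialCutoff_le
    (hC : ∀ t, |deriv Real.smoothTransition t| ≤ C ∧ |deriv (deriv Real.smoothTransition) t| ≤ C)
    (hb : 0 ≤ b) (hx : ‖x‖ ≤ R) (j : Fin 3) :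
    |pd (radialCutoff a b) j x| ≤ 2 * C * (b * R) := by
  rw [pd_radialCutoff, abs_neg, radialSlope, abs_mul, abs_mul,
    abs_of_nonneg (by positivity : 0 ≤ 2 * b)]
  calc |x j| * (2 * b * |deriv Real.smoothTransition (a - b * ‖x‖ ^ 2)|)
      ≤ R * (2 * b * C) := by
        gcongr
        · exact (norm_nonneg x).trans hx
        · exact (PiLp.norm_apply_le x j).trans hx
        · exact (hC _).1
    _ = 2 * C * (b * R) := by ring

lemma abs_lap_radialCutoff_le
    (hC : ∀ t, |deriv Real.smoothTransition t| ≤ C ∧ |deriv (deriv Real.smoothTransition) t| ≤ C)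
    (hb : 0 ≤ b) (hx : ‖x‖ ≤ R) :
    |lap (radialCutoff a b) x| ≤ 4 * C * (b * R) ^ 2 + 6 * C * b := by
  rw [lap_radialCutoff]
  refine (abs_sub _ _).trans ?_
  rw [abs_mul, abs_mul (6 * b), abs_of_nonneg (by positivity : 0 ≤ 4 * b ^ 2 * ‖x‖ ^ 2),
    abs_of_nonneg (by positivity : 0 ≤ 6 * b)]
  calc 4 * b ^ 2 * ‖x‖ ^ 2 * |deriv (deriv Real.smoothTransition) (a - b * ‖x‖ ^ 2)| +
        6 * b * |deriv Real.smoothTransition (a - b * ‖x‖ ^ 2)|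
      ≤ 4 * b ^ 2 * R ^ 2 * C + 6 * b * C := by
        gcongr
        · exact (hC _).2
        · exact (hC _).1
    _ = 4 * C * (b * R) ^ 2 + 6 * C * b := by ring

lemma isCutoff_radialCutoff
    (hC : ∀ t, |deriv Real.smoothTransition t| ≤ C ∧ |deriv (deriv Real.smoothTransition) t| ≤ C)
    (hρ : 0 ≤ ρ) (hs : 0 < s) :
    IsCutoff (10 * C) ρ s
      (radialCutoff (1 + (s * (2 * ρ + s))⁻¹ * ρ ^ 2) (s * (2 * ρ + s))⁻¹) := by
  set b := (s * (2 * ρ + s))⁻¹ with hb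
  have hb₀ : 0 < b := by positivity
  have hC₀ : 0 ≤ C := (abs_nonneg _).trans (hC 0).1
  have hedge : 1 + b * ρ ^ 2 = b * (ρ + s) ^ 2 := by rw [hb]; field_simp; ring
  have hbs : b ≤ s⁻¹ ^ 2 := by
    rw [hb, inv_pow]
    gcongr
    nlinarith
  have hbr : b * (ρ + s) ≤ s⁻¹ := by
    rw [hb, mul_inv, mul_assoc]
    refine mul_le_of_le_one_right (by positivity) ?_
    rw [inv_mul_le_one₀ (by positivity)]
    linarith
  have hsupp : tsupport (radialCutoff (1 + b * ρ ^ 2) b) ⊆ closedBall 0 (ρ + s) :=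
    tsupport_radialCutoff_subset fun t ht => by rw [hedge]; gcongr
  refine ⟨contDiff_radialCutoff _ _, hsupp, fun x => radialCutoff_nonneg x,
    fun x => Real.smoothTransition.le_one _, fun x hx => ?_, fun j x => ?_, fun x => ?_⟩
  · rw [mem_closedBall_zero_iff] at hx
    have hbx : b * ‖x‖ ^ 2 ≤ b * ρ ^ 2 := by gcongr
    exact Real.smoothTransition.one_of_one_le (by linarith)
  · by_cases hx : x ∈ closedBall 0 (ρ + s)
    · refine (abs_pd_radialCutoff_le hC hb₀.le (mem_closedBall_zero_iff.mp hx) j).trans ?_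
      gcongr
      norm_num
    · rw [image_eq_zero_of_notMem_tsupport fun h => hx (hsupp (tsupport_pd_subset _ j h)),
        abs_zero]
      positivity
  · by_cases hx : x ∈ closedBall 0 (ρ + s)
    · calc |lap (radialCutoff (1 + b * ρ ^ 2) b) x|
          ≤ 4 * C * (b * (ρ + s)) ^ 2 + 6 * C * b :=
            abs_lap_radialCutoff_le hC hb₀.le (mem_closedBall_zero_iff.mp hx)
        _ ≤ 4 * C * s⁻¹ ^ 2 + 6 * C * s⁻¹ ^ 2 := by gcongr
        _ = 10 * C * s⁻¹ ^ 2 := by ring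
    · rw [image_eq_zero_of_notMem_tsupport fun h => hx (hsupp (tsupport_lap_subset _ h)), abs_zero]
      positivity

end Bounds

lemma exists_isCutoff :
    ∃ C, 0 ≤ C ∧ ∀ ρ s, 0 ≤ ρ → 0 < s → ∃ φ, IsCutoff C ρ s φ := by
  obtain ⟨C, hC₀, hC⟩ := exists_abs_deriv_smoothTransition_le
  exact ⟨10 * C, by positivity, fun ρ s hρ hs => ⟨_, isCutoff_radialCutoff hC hρ hs⟩⟩

end Cutoff

section Family

variable {ι : Type*} [Fintype ι]

/-- The pointwise squared norm of a finite family of functions. -/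
def normSq (w : ι → R3 → ℝ) (x : R3) : ℝ := ∑ k, w k x ^ 2

/-- The pointwise squared norm of the gradient of a finite family of functions. -/
def gradSq (w : ι → R3 → ℝ) (x : R3) : ℝ := ∑ k, ∑ j, pd (w k) j x ^ 2

variable {w : ι → R3 → ℝ}

lemma normSq_nonneg (w : ι → R3 → ℝ) (x : R3) : 0 ≤ normSq w x :=
  Finset.sum_nonneg fun _ _ => sq_nonneg _

lemma gradSq_nonneg (w : ι → R3 → ℝ) (x : R3) : 0 ≤ gradSq w x :=
  Finset.sum_nonneg fun _ _ => Finset.sum_nonneg fun _ _ => sq_nonneg _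

lemma contDiff_normSq (hw : ∀ k, ContDiff ℝ ∞ (w k)) : ContDiff ℝ ∞ (normSq w) :=
  ContDiff.sum fun k _ => (hw k).pow 2

lemma contDiff_gradSq (hw : ∀ k, ContDiff ℝ ∞ (w k)) : ContDiff ℝ ∞ (gradSq w) :=
  ContDiff.sum fun k _ => ContDiff.sum fun j _ => (contDiff_pd (hw k) j).pow 2

lemma pd_normSq (hw : ∀ k, ContDiff ℝ ∞ (w k)) (j : Fin 3) :
    pd (normSq w) j = fun x => ∑ k, 2 * (w k x * pd (w k) j x) := by
  ext x
  have hd (k : ι) : DifferentiableAt ℝ (w k) x := (differentiable_of_smooth (hw k)).differentiableAt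
  have hsum : normSq w = fun y => ∑ k, w k y * w k y := by
    ext y
    simp only [normSq, sq]
  rw [hsum, pd_fun_sum _ fun k _ => (hd k).fun_mul (hd k)]
  refine Finset.sum_congr rfl fun k _ => ?_
  rw [pd_fun_mul (hd k) (hd k)]
  ring

lemma lap_normSq (hw : ∀ k, ContDiff ℝ ∞ (w k)) (x : R3) :
    lap (normSq w) x = 2 * gradSq w x + 2 * ∑ k, w k x * lap (w k) x := by
  have hd (k : ι) : DifferentiableAt ℝ (w k) x := (differentiable_of_smooth (hw k)).differentiableAt
  have hd' (k : ι) (j : Fin 3) : DifferentiableAt ℝ (pd (w k) j) x :=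
    (differentiable_of_smooth (contDiff_pd (hw k) j)).differentiableAt
  have hterm (j : Fin 3) : pd (pd (normSq w) j) j x =
      ∑ k, 2 * (w k x * pd (pd (w k) j) j x + pd (w k) j x * pd (w k) j x) := by
    rw [pd_normSq hw, pd_fun_sum _ fun k _ => ((hd k).fun_mul (hd' k j)).const_mul 2]
    refine Finset.sum_congr rfl fun k _ => ?_
    rw [pd_const_mul ((hd k).fun_mul (hd' k j)), pd_fun_mul (hd k) (hd' k j)]
  simp only [lap, hterm, gradSq]
  rw [Finset.sum_comm, Finset.mul_sum, Finset.mul_sum, ← Finset.sum_add_distrib]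
  refine Finset.sum_congr rfl fun k _ => ?_
  simp only [Finset.mul_sum, ← Finset.sum_add_distrib]
  exact Finset.sum_congr rfl fun j _ => by ring

lemma integral_mul_gradSq {φ : R3 → ℝ} (hw : ∀ k, ContDiff ℝ ∞ (w k)) (hφ : ContDiff ℝ ∞ φ)
    (hc : HasCompactSupport φ) :
    ∫ x, gradSq w x * φ x =
      2⁻¹ * (∫ x, normSq w x * lap φ x) - ∫ x, (∑ k, w k x * lap (w k) x) * φ x := by
  have hsum : ContDiff ℝ ∞ fun x => ∑ k, w k x * lap (w k) x :=
    ContDiff.sum fun k _ => (hw k).mul (contDiff_lap (hw k))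
  rw [← integral_lap_mul (contDiff_normSq hw) hφ hc, ← integral_const_mul, ← integral_sub
    ((integrable_mul_of_hasCompactSupport (contDiff_lap (contDiff_normSq hw)).continuous
      hφ.continuous hc).const_mul _)
    (integrable_mul_of_hasCompactSupport hsum.continuous hφ.continuous hc)]
  congr 1 with x
  rw [lap_normSq hw]
  ring

end Family

section EnergyBalance

/-- `(u, v, P, θ)` is a smooth solution of the stationary tropical climate model. -/
structure SmoothTCM (u v : R3 → R3) (P θ : R3 → ℝ) : Prop where
  contDiff_u : ContDiff ℝ ∞ u
  contDiff_v : ContDiff ℝ ∞ v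
  contDiff_P : ContDiff ℝ ∞ P
  contDiff_θ : ContDiff ℝ ∞ θ
  tcm : TCM u v P θ

/-- The seven scalar unknowns `u₁, u₂, u₃, v₁, v₂, v₃, θ` as one family. -/
def state (u v : R3 → R3) (θ : R3 → ℝ) : Fin 3 ⊕ Fin 3 ⊕ Unit → R3 → ℝ :=
  Sum.elim (fun i x => u x i) (Sum.elim (fun i x => v x i) fun _ => θ)

/-- The energy flux `½ |w|² u + (u · v + θ) v` of the model, `w = (u, v, θ)`, without the part
`P u` due to the pressure. -/
def energyFlux (u v : R3 → R3) (θ : R3 → ℝ) (j : Fin 3) (x : R3) : ℝ :=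
  u x j * (2⁻¹ * normSq (state u v θ) x) + v x j * ((∑ i, u x i * v x i) + θ x)

variable {u v : R3 → R3} {P θ : R3 → ℝ}

lemma normSq_state (u v : R3 → R3) (θ : R3 → ℝ) (x : R3) :
    normSq (state u v θ) x = ‖u x‖ ^ 2 + ‖v x‖ ^ 2 + θ x ^ 2 := by
  simp only [normSq, state, Fintype.sum_sum_type, Sum.elim_inl, Sum.elim_inr, Finset.univ_unique,
    Finset.sum_singleton, EuclideanSpace.real_norm_sq_eq, add_assoc]

lemma contDiff_coord {f : R3 → R3} (hf : ContDiff ℝ ∞ f) (i : Fin 3) :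
    ContDiff ℝ ∞ fun x => f x i :=
  (EuclideanSpace.proj i : R3 →L[ℝ] ℝ).contDiff.comp hf

namespace SmoothTCM

lemma contDiff_state (h : SmoothTCM u v P θ) : ∀ k, ContDiff ℝ ∞ (state u v θ k)
  | .inl i => contDiff_coord h.contDiff_u i
  | .inr (.inl i) => contDiff_coord h.contDiff_v i
  | .inr (.inr _) => h.contDiff_θ

lemma stokesSystem (h : SmoothTCM u v P θ) :
    StokesSystem (fun i x => u x i) P (fun i j x => u x j * u x i + v x j * v x i) where
  contDiff_velocity := contDiff_coord h.contDiff_u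
  contDiff_pressure := h.contDiff_P
  contDiff_stress i j := ((contDiff_coord h.contDiff_u j).mul (contDiff_coord h.contDiff_u i)).add
    ((contDiff_coord h.contDiff_v j).mul (contDiff_coord h.contDiff_v i))
  momentum i x := by
    have hu (j : Fin 3) : DifferentiableAt ℝ (fun y => u y j) x :=
      (differentiable_of_smooth (contDiff_coord h.contDiff_u j)).differentiableAt
    have hv (j : Fin 3) : DifferentiableAt ℝ (fun y => v y j) x :=
      (differentiable_of_smooth (contDiff_coord h.contDiff_v j)).differentiableAt
    simp only [divergence, pd_fun_add ((hu _).fun_mul (hu i)) ((hv _).fun_mul (hv i)),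
      pd_fun_mul (hu _) (hu i), Finset.sum_add_distrib, ← Finset.sum_mul, h.tcm.2.2.2 x]
    linarith [h.tcm.1 i x]
  divergence_free := h.tcm.2.2.2

lemma contDiff_energyFlux (h : SmoothTCM u v P θ) (j : Fin 3) :
    ContDiff ℝ ∞ (energyFlux u v θ j) :=
  ((contDiff_coord h.contDiff_u j).mul (contDiff_const.mul (contDiff_normSq h.contDiff_state))).add
    ((contDiff_coord h.contDiff_v j).mul ((ContDiff.sum fun i _ =>
      (contDiff_coord h.contDiff_u i).mul (contDiff_coord h.contDiff_v i)).add h.contDiff_θ))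

lemma pd_energyFlux (h : SmoothTCM u v P θ) (j : Fin 3) (x : R3) :
    pd (energyFlux u v θ j) j x =
      u x j * ∑ k, state u v θ k x * pd (state u v θ k) j x +
        pd (fun y => u y j) j x * (2⁻¹ * normSq (state u v θ) x) +
      (v x j * (∑ i, (u x i * pd (fun y => v y i) j x + pd (fun y => u y i) j x * v x i) +
          pd θ j x) +
        pd (fun y => v y j) j x * ((∑ i, u x i * v x i) + θ x)) := by
  have hu (i : Fin 3) : DifferentiableAt ℝ (fun y => u y i) x :=
    (differentiable_of_smooth (contDiff_coord h.contDiff_u i)).differentiableAt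
  have hv (i : Fin 3) : DifferentiableAt ℝ (fun y => v y i) x :=
    (differentiable_of_smooth (contDiff_coord h.contDiff_v i)).differentiableAt
  have hθ : DifferentiableAt ℝ θ x := (differentiable_of_smooth h.contDiff_θ).differentiableAt
  have hN : DifferentiableAt ℝ (normSq (state u v θ)) x :=
    (differentiable_of_smooth (contDiff_normSq h.contDiff_state)).differentiableAt
  have huv : DifferentiableAt ℝ (fun y => ∑ i, u y i * v y i) x :=
    DifferentiableAt.fun_sum fun i _ => (hu i).fun_mul (hv i)
  unfold energyFlux
  rw [pd_fun_add ((hu j).fun_mul (hN.const_mul _)) ((hv j).fun_mul (huv.fun_add hθ)),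
    pd_fun_mul (hu j) (hN.const_mul _), pd_fun_mul (hv j) (huv.fun_add hθ), pd_const_mul hN,
    pd_fun_add huv hθ, pd_fun_sum _ fun i _ => (hu i).fun_mul (hv i), pd_normSq h.contDiff_state]
  simp only [pd_fun_mul (hu _) (hv _), ← Finset.mul_sum]
  ring

lemma sum_state_mul_lap (h : SmoothTCM u v P θ) (x : R3) :
    ∑ k, state u v θ k x * lap (state u v θ k) x =
      divergence (energyFlux u v θ) x + ∑ j, pd P j x * u x j := by
  have hv (j : Fin 3) : DifferentiableAt ℝ (fun y => v y j) x :=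
    (differentiable_of_smooth (contDiff_coord h.contDiff_v j)).differentiableAt
  obtain ⟨h₁, h₂, h₃, h₄⟩ := h.tcm
  have h₁ (i : Fin 3) := h₁ i x
  simp only [pd_fun_mul (hv _) (hv _)] at h₁
  have h₂ (i : Fin 3) := h₂ i x
  have h₃ := h₃ x
  have h₄ := h₄ x
  simp only [divergence, h.pd_energyFlux]
  simp only [normSq, state, Fintype.sum_sum_type, Sum.elim_inl, Sum.elim_inr, Finset.univ_unique,
    Finset.sum_singleton]
  have a₀ := h₁ 0
  have a₁ := h₁ 1
  have a₂ := h₁ 2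
  have b₀ := h₂ 0
  have b₁ := h₂ 1
  have b₂ := h₂ 2
  simp only [Fin.sum_univ_three] at a₀ a₁ a₂ b₀ b₁ b₂ h₃ h₄ ⊢
  linear_combination -u x 0 * a₀ - u x 1 * a₁ - u x 2 * a₂ - v x 0 * b₀ - v x 1 * b₁ -
    v x 2 * b₂ - θ x * h₃ - 2⁻¹ * (u x 0 ^ 2 + u x 1 ^ 2 + u x 2 ^ 2 +
      (v x 0 ^ 2 + v x 1 ^ 2 + v x 2 ^ 2 + θ x ^ 2)) * h₄

lemma divergence_cutoff_mul (h : SmoothTCM u v P θ) {φ : R3 → ℝ} (hφ : ContDiff ℝ ∞ φ) :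
    divergence (fun i y => φ y * u y i) = fun x => ∑ i, pd φ i x * u x i := by
  ext x
  have hu (i : Fin 3) : DifferentiableAt ℝ (fun y => u y i) x :=
    (differentiable_of_smooth (contDiff_coord h.contDiff_u i)).differentiableAt
  have hφx : DifferentiableAt ℝ φ x := (differentiable_of_smooth hφ).differentiableAt
  simp only [divergence, pd_fun_mul hφx (hu _), Finset.sum_add_distrib, ← Finset.mul_sum,
    h.tcm.2.2.2 x, mul_zero, zero_add]

lemma integral_gradSq_mul (h : SmoothTCM u v P θ) {φ : R3 → ℝ} (hφ : ContDiff ℝ ∞ φ)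
    (hc : HasCompactSupport φ) :
    ∫ x, gradSq (state u v θ) x * φ x =
      2⁻¹ * (∫ x, normSq (state u v θ) x * lap φ x) +
        (∑ j, ∫ x, energyFlux u v θ j x * pd φ j x) +
        ∫ x, P x * divergence (fun i y => φ y * u y i) x := by
  have hpressure : ContDiff ℝ ∞ fun x => ∑ j, pd P j x * u x j :=
    ContDiff.sum fun j _ => (contDiff_pd h.contDiff_P j).mul (contDiff_coord h.contDiff_u j)
  rw [integral_mul_gradSq h.contDiff_state hφ hc, integral_mul_divergence h.contDiff_P
    (fun i => hφ.mul (contDiff_coord h.contDiff_u i)) fun i => hc.mul_right]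
  simp only [h.sum_state_mul_lap, add_mul]
  rw [integral_add
      (integrable_mul_of_hasCompactSupport
        (contDiff_divergence h.contDiff_energyFlux).continuous hφ.continuous hc)
      (integrable_mul_of_hasCompactSupport hpressure.continuous hφ.continuous hc),
    integral_divergence_mul h.contDiff_energyFlux hφ hc]
  simp only [Finset.sum_mul]
  rw [integral_finsetSum _ fun j _ => integrable_mul_of_hasCompactSupport
    ((contDiff_pd h.contDiff_P j).mul (contDiff_coord h.contDiff_u j)).continuous hφ.continuous hc]
  simp only [mul_assoc, mul_comm (φ _)]
  ring

end SmoothTCM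

end EnergyBalance

section BallIntegrals

variable {f g h : R3 → ℝ} {r r' c : ℝ}

lemma integrableOn_closedBall (hf : Continuous f) (r : ℝ) : IntegrableOn f (closedBall 0 r) :=
  hf.continuousOn.integrableOn_compact (isCompact_closedBall 0 r)

lemma memLp_two_closedBall (hf : Continuous f) (r : ℝ) :
    MemLp f 2 (volume.restrict (closedBall 0 r)) :=
  (memLp_two_iff_integrable_sq hf.aestronglyMeasurable).mpr (integrableOn_closedBall (hf.pow 2) r)

lemma setIntegral_closedBall_mono (hf : Continuous f) (hg : Continuous g) (hfg : ∀ x, f x ≤ g x)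
    (r : ℝ) : ∫ x in closedBall 0 r, f x ≤ ∫ x in closedBall 0 r, g x :=
  setIntegral_mono (integrableOn_closedBall hf r) (integrableOn_closedBall hg r) hfg

lemma setIntegral_closedBall_mono_radius (hf : Continuous f) (h₀ : ∀ x, 0 ≤ f x) (hr : r ≤ r') :
    ∫ x in closedBall 0 r, f x ≤ ∫ x in closedBall 0 r', f x :=
  setIntegral_mono_set (integrableOn_closedBall hf r') (Eventually.of_forall h₀)
    (Eventually.of_forall (closedBall_subset_closedBall hr))

lemma setIntegral_closedBall_mul_le_sqrt_mul_sqrt (hf : Continuous f) (hg : Continuous g) (r : ℝ) :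
    ∫ x in closedBall 0 r, f x * g x ≤
      √(∫ x in closedBall 0 r, f x ^ 2) * √(∫ x in closedBall 0 r, g x ^ 2) := by
  rw [← lpNorm_two_eq_sqrt_integral hf.aestronglyMeasurable,
    ← lpNorm_two_eq_sqrt_integral hg.aestronglyMeasurable]
  exact (le_abs_self _).trans (abs_integral_mul_le_lpNorm_mul_lpNorm
    (memLp_two_closedBall hf r) (memLp_two_closedBall hg r))

lemma lpNorm_two_closedBall_le (hg : Continuous g)
    (hfg : ∀ x, |f x| ≤ g x) (r : ℝ) :
    lpNorm f 2 (volume.restrict (closedBall 0 r)) ≤ √(∫ x in closedBall 0 r, g x ^ 2) := by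
  rw [← lpNorm_two_eq_sqrt_integral hg.aestronglyMeasurable]
  exact lpNorm_mono_real (memLp_two_closedBall hg r) hfg

lemma lpNorm_two_le_of_tsupport_subset (hf : Continuous f) (hg : Continuous g)
    (hfg : ∀ x, |f x| ≤ g x) (hr : tsupport f ⊆ closedBall 0 r) :
    lpNorm f 2 volume ≤ √(∫ x in closedBall 0 r, g x ^ 2) := by
  refine le_of_eq_of_le ?_ (lpNorm_two_closedBall_le hg hfg r)
  rw [lpNorm_two_eq_sqrt_integral hf.aestronglyMeasurable,
    lpNorm_two_eq_sqrt_integral hf.aestronglyMeasurable,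
    setIntegral_eq_integral_of_forall_compl_eq_zero (f := fun x => f x ^ 2) fun x hx => ?_]
  rw [image_eq_zero_of_notMem_tsupport fun h => hx (hr h), zero_pow two_ne_zero]

lemma abs_integral_mul_le_mul_setIntegral (hh : Continuous h)
    (hfh : ∀ x, |f x| ≤ h x) (hgc : ∀ x, |g x| ≤ c) (hr : tsupport g ⊆ closedBall 0 r) :
    |∫ x, f x * g x| ≤ c * ∫ x in closedBall 0 r, h x := by
  have hball : ∫ x in closedBall 0 r, f x * g x = ∫ x, f x * g x :=
    setIntegral_eq_integral_of_forall_compl_eq_zero fun x hx => by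
      rw [image_eq_zero_of_notMem_tsupport fun h => hx (hr h), mul_zero]
  rw [← hball, ← integral_const_mul, ← Real.norm_eq_abs]
  refine norm_integral_le_of_norm_le (integrableOn_closedBall (hh.const_mul c) r)
    (Eventually.of_forall fun x => ?_)
  rw [norm_mul, mul_comm]
  exact mul_le_mul (hgc x) (hfh x) (abs_nonneg _) ((abs_nonneg _).trans (hgc x))

end BallIntegrals

section Caccioppoli

variable {u v : R3 → R3} {P θ φ : R3 → ℝ} {C ρ s r : ℝ}

/-- The quantity bounding the dissipation in the ball of radius `r - 2s` in the Caccioppoli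
inequality: each derivative that falls on the cutoff function costs a factor `s⁻¹`. -/
def cutoffError (u v : R3 → R3) (θ : R3 → ℝ) (s r : ℝ) : ℝ :=
  s⁻¹ ^ 2 * (∫ x in closedBall 0 r, normSq (state u v θ) x) +
    s⁻¹ * (√(∫ x in closedBall 0 r, ‖u x‖ ^ 2) *
      √(∫ x in closedBall 0 r, normSq (state u v θ) x ^ 2)) +
    s⁻¹ * ∫ x in closedBall 0 r, (‖v x‖ ^ 2 + θ x ^ 2)

lemma integral_normSq_le_cutoffError (u v : R3 → R3) (θ : R3 → ℝ) (hs : 0 ≤ s) (r : ℝ) :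
    s⁻¹ ^ 2 * (∫ x in closedBall 0 r, normSq (state u v θ) x) ≤ cutoffError u v θ s r := by
  have : 0 ≤ ∫ x in closedBall 0 r, (‖v x‖ ^ 2 + θ x ^ 2) :=
    integral_nonneg fun x => by positivity
  rw [cutoffError, add_assoc]
  exact le_add_of_nonneg_right (by positivity)

lemma transport_le_cutoffError (u v : R3 → R3) (θ : R3 → ℝ) (s r : ℝ) :
    s⁻¹ * (√(∫ x in closedBall 0 r, ‖u x‖ ^ 2) *
        √(∫ x in closedBall 0 r, normSq (state u v θ) x ^ 2)) +
      s⁻¹ * ∫ x in closedBall 0 r, (‖v x‖ ^ 2 + θ x ^ 2) ≤ cutoffError u v θ s r := by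
  have hN : 0 ≤ ∫ x in closedBall 0 r, normSq (state u v θ) x :=
    integral_nonneg fun x => normSq_nonneg _ x
  rw [cutoffError, add_assoc]
  exact le_add_of_nonneg_left (by positivity)

lemma abs_energyFlux_le (u v : R3 → R3) (θ : R3 → ℝ) (j : Fin 3) (x : R3) :
    |energyFlux u v θ j x| ≤
      2 * (‖u x‖ * normSq (state u v θ) x) + (‖v x‖ ^ 2 + θ x ^ 2) := by
  have hinner : |∑ i, u x i * v x i| ≤ ‖u x‖ * ‖v x‖ := by
    simpa [PiLp.inner_apply, mul_comm] using abs_real_inner_le_norm (u x) (v x)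
  have hu : |u x j| ≤ ‖u x‖ := PiLp.norm_apply_le (u x) j
  have hv : |v x j| ≤ ‖v x‖ := PiLp.norm_apply_le (v x) j
  have hN := normSq_nonneg (state u v θ) x
  have habs : |energyFlux u v θ j x| ≤
      ‖u x‖ * (2⁻¹ * normSq (state u v θ) x) + ‖v x‖ * (‖u x‖ * ‖v x‖ + |θ x|) := by
    refine (abs_add_le _ _).trans ?_
    rw [abs_mul, abs_mul (v x j), abs_of_nonneg (by positivity : 0 ≤ 2⁻¹ * normSq _ x)]
    gcongr
    exact (abs_add_le _ _).trans (by gcongr)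
  have hvN : ‖u x‖ * ‖v x‖ ^ 2 ≤ ‖u x‖ * normSq (state u v θ) x := by
    rw [normSq_state]
    gcongr
    linarith [sq_nonneg ‖u x‖, sq_nonneg (θ x)]
  have hyoung : ‖v x‖ * |θ x| ≤ ‖v x‖ ^ 2 + θ x ^ 2 := by
    rw [← sq_abs (θ x)]
    nlinarith [sq_nonneg (‖v x‖ - |θ x|), sq_nonneg ‖v x‖, sq_nonneg (θ x)]
  have hu₀ : 0 ≤ ‖u x‖ * normSq (state u v θ) x := by positivity
  linarith

lemma abs_stress_le (u v : R3 → R3) (θ : R3 → ℝ) (i j : Fin 3) (x : R3) :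
    |u x j * u x i + v x j * v x i| ≤ normSq (state u v θ) x := by
  have hmul (y : R3) : |y j * y i| ≤ ‖y‖ ^ 2 := by
    rw [abs_mul, sq]
    exact mul_le_mul (PiLp.norm_apply_le y j) (PiLp.norm_apply_le y i) (abs_nonneg _)
      (norm_nonneg y)
  rw [normSq_state]
  linarith [abs_add_le (u x j * u x i) (v x j * v x i), hmul (u x), hmul (v x), sq_nonneg (θ x)]

namespace SmoothTCM

lemma continuous_normSq (h : SmoothTCM u v P θ) : Continuous (normSq (state u v θ)) :=
  (contDiff_normSq h.contDiff_state).continuous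

lemma continuous_remainder (h : SmoothTCM u v P θ) : Continuous fun x => ‖v x‖ ^ 2 + θ x ^ 2 :=
  (h.contDiff_v.continuous.norm.pow 2).add (h.contDiff_θ.continuous.pow 2)

lemma abs_integral_energyFlux_mul_pd_le (h : SmoothTCM u v P θ) (hφ : IsCutoff C ρ s φ)
    (hr : ρ + s ≤ r) (hs : 0 < s) (hC : 0 ≤ C) (j : Fin 3) :
    |∫ x, energyFlux u v θ j x * pd φ j x| ≤ 2 * C * cutoffError u v θ s r := by
  have hu := h.contDiff_u.continuous.norm
  have hN := h.continuous_normSq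
  have hbound := abs_integral_mul_le_mul_setIntegral
    (h := fun x => 2 * (‖u x‖ * normSq (state u v θ) x) + (‖v x‖ ^ 2 + θ x ^ 2))
    (((hu.mul hN).const_mul 2).add h.continuous_remainder) (abs_energyFlux_le u v θ j)
    (hφ.abs_pd_le j) ((tsupport_pd_subset φ j).trans
      (hφ.tsupport_subset.trans (closedBall_subset_closedBall hr)))
  rw [integral_add (integrableOn_closedBall ((hu.fun_mul hN).const_mul 2) r)
    (integrableOn_closedBall h.continuous_remainder r), integral_const_mul] at hbound
  have hcs := setIntegral_closedBall_mul_le_sqrt_mul_sqrt hu hN r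
  have hrem : 0 ≤ ∫ x in closedBall 0 r, (‖v x‖ ^ 2 + θ x ^ 2) :=
    integral_nonneg fun x => by positivity
  calc |∫ x, energyFlux u v θ j x * pd φ j x|
      ≤ C * s⁻¹ * (2 * (√(∫ x in closedBall 0 r, ‖u x‖ ^ 2) *
          √(∫ x in closedBall 0 r, normSq (state u v θ) x ^ 2)) +
            2 * ∫ x in closedBall 0 r, (‖v x‖ ^ 2 + θ x ^ 2)) := by
        refine hbound.trans ?_
        gcongr
        linarith
    _ = 2 * C * (s⁻¹ * (√(∫ x in closedBall 0 r, ‖u x‖ ^ 2) *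
          √(∫ x in closedBall 0 r, normSq (state u v θ) x ^ 2)) +
            s⁻¹ * ∫ x in closedBall 0 r, (‖v x‖ ^ 2 + θ x ^ 2)) := by ring
    _ ≤ 2 * C * cutoffError u v θ s r := by
        gcongr
        exact transport_le_cutoffError u v θ s r

lemma abs_integral_normSq_mul_lap_le (h : SmoothTCM u v P θ) (hφ : IsCutoff C ρ s φ)
    (hr : ρ + s ≤ r) (hs : 0 < s) (hC : 0 ≤ C) :
    |∫ x, normSq (state u v θ) x * lap φ x| ≤ C * cutoffError u v θ s r := by
  have hbound := abs_integral_mul_le_mul_setIntegral h.continuous_normSq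
    (fun x => (abs_of_nonneg (normSq_nonneg _ x)).le) hφ.abs_lap_le
    ((tsupport_lap_subset φ).trans (hφ.tsupport_subset.trans (closedBall_subset_closedBall hr)))
  refine hbound.trans ?_
  rw [mul_assoc]
  gcongr
  exact integral_normSq_le_cutoffError u v θ hs.le r

lemma abs_divergence_cutoff_mul_le (h : SmoothTCM u v P θ) (hφ : IsCutoff C ρ s φ) (x : R3) :
    |divergence (fun i y => φ y * u y i) x| ≤ 3 * (C * s⁻¹) * ‖u x‖ := by
  rw [h.divergence_cutoff_mul hφ.contDiff, mul_assoc]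
  refine abs_sum_fin_three_le fun i => ?_
  rw [abs_mul]
  exact mul_le_mul (hφ.abs_pd_le i x) (PiLp.norm_apply_le (u x) i) (abs_nonneg _)
    ((abs_nonneg _).trans (hφ.abs_pd_le i x))

lemma lpNorm_divergence_cutoff_mul_le (h : SmoothTCM u v P θ) (hφ : IsCutoff C ρ s φ)
    (hr : ρ + s ≤ r) (hs : 0 < s) (hC : 0 ≤ C) :
    lpNorm (divergence fun i y => φ y * u y i) 2 volume ≤
      3 * (C * s⁻¹) * √(∫ x in closedBall 0 r, ‖u x‖ ^ 2) := by
  have hX (i : Fin 3) : ContDiff ℝ ∞ fun y => φ y * u y i :=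
    hφ.contDiff.mul (contDiff_coord h.contDiff_u i)
  refine (lpNorm_two_le_of_tsupport_subset (contDiff_divergence hX).continuous
    (h.contDiff_u.continuous.norm.const_mul _) (h.abs_divergence_cutoff_mul_le hφ)
    (tsupport_divergence_subset fun i => tsupport_mul_subset_left.trans
      (hφ.tsupport_subset.trans (closedBall_subset_closedBall hr)))).trans_eq ?_
  simp only [mul_pow _ ‖u _‖, integral_const_mul]
  rw [Real.sqrt_mul (sq_nonneg _), Real.sqrt_sq (by positivity)]

lemma abs_integral_pressure_mul_divergence_le (h : SmoothTCM u v P θ) (hφ : IsCutoff C ρ s φ)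
    (hs : 0 < s) (hC : 0 ≤ C) :
    |∫ x, P x * divergence (fun i y => φ y * u y i) x| ≤
      pressureConst * (3 * C + 2) * cutoffError u v θ s (ρ + s + s) := by
  set r := ρ + s + s
  have hr : ρ + s ≤ r := by linarith
  have hu := h.contDiff_u.continuous.norm
  have hcoord (x : R3) (i : Fin 3) : |u x i| ≤ ‖u x‖ := PiLp.norm_apply_le (u x) i
  have hX (i : Fin 3) : ContDiff ℝ ∞ fun y => φ y * u y i :=
    hφ.contDiff.mul (contDiff_coord h.contDiff_u i)
  have hXr (i : Fin 3) : tsupport (fun y => φ y * u y i) ⊆ closedBall 0 (ρ + s) :=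
    tsupport_mul_subset_left.trans hφ.tsupport_subset
  have hXu (i : Fin 3) (x : R3) : |φ x * u x i| ≤ ‖u x‖ := by
    rw [abs_mul, abs_of_nonneg (hφ.nonneg x)]
    exact (mul_le_of_le_one_left (abs_nonneg _) (hφ.le_one x)).trans (hcoord x i)
  have hbound := h.stokesSystem.abs_integral_pressure_mul_divergence_le hs
    (fun i j => lpNorm_two_closedBall_le h.continuous_normSq (abs_stress_le u v θ i j) r)
    (fun i => lpNorm_two_closedBall_le hu (fun x => hcoord x i) r) hX hXr
    (fun i => lpNorm_two_le_of_tsupport_subset (hX i).continuous hu (hXu i)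
      ((hXr i).trans (closedBall_subset_closedBall hr)))
    (h.lpNorm_divergence_cutoff_mul_le hφ hr hs hC)
  have henergy : s⁻¹ ^ 2 * √(∫ x in closedBall 0 r, ‖u x‖ ^ 2) ^ 2 ≤ cutoffError u v θ s r := by
    refine le_trans ?_ (integral_normSq_le_cutoffError u v θ hs.le r)
    rw [Real.sq_sqrt (integral_nonneg fun x => by positivity)]
    refine mul_le_mul_of_nonneg_left ?_ (by positivity)
    refine setIntegral_closedBall_mono (hu.pow 2) h.continuous_normSq (fun x => ?_) r
    rw [normSq_state, Pi.pow_apply]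
    linarith [sq_nonneg ‖v x‖, sq_nonneg (θ x)]
  have hrem : 0 ≤ s⁻¹ * ∫ x in closedBall 0 r, (‖v x‖ ^ 2 + θ x ^ 2) :=
    mul_nonneg (by positivity) (integral_nonneg fun x => by positivity)
  have htransport := (le_add_of_nonneg_right hrem).trans (transport_le_cutoffError u v θ s r)
  have hC₁ : 0 ≤ 3 * C + 1 := by positivity
  refine hbound.trans ?_
  rw [mul_assoc pressureConst]
  refine mul_le_mul_of_nonneg_left ?_ pressureConst_nonneg
  linarith [mul_le_mul_of_nonneg_left htransport hC₁]

end SmoothTCM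

lemma exists_caccioppoli : ∃ C, 0 ≤ C ∧ ∀ {u v : R3 → R3} {P θ : R3 → ℝ}, SmoothTCM u v P θ →
    ∀ {ρ s : ℝ}, 0 ≤ ρ → 0 < s →
      ∫ x in closedBall 0 ρ, gradSq (state u v θ) x ≤ C * cutoffError u v θ s (ρ + s + s) := by
  obtain ⟨C, hC, hcutoff⟩ := exists_isCutoff
  refine ⟨2⁻¹ * C + 3 * (2 * C) + pressureConst * (3 * C + 2), ?_,
    fun {u v P θ} h {ρ s} hρ hs => ?_⟩
  · have := pressureConst_nonneg
    positivity
  obtain ⟨φ, hφ⟩ := hcutoff ρ s hρ hs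
  have hG : Continuous (gradSq (state u v θ)) := (contDiff_gradSq h.contDiff_state).continuous
  have hr : ρ + s ≤ ρ + s + s := by linarith
  have hdiffusion := h.abs_integral_normSq_mul_lap_le hφ hr hs hC
  have hflux := abs_sum_fin_three_le (h.abs_integral_energyFlux_mul_pd_le hφ hr hs hC)
  have hpressure := h.abs_integral_pressure_mul_divergence_le hφ hs hC
  calc ∫ x in closedBall 0 ρ, gradSq (state u v θ) x
      = ∫ x in closedBall 0 ρ, gradSq (state u v θ) x * φ x :=
        setIntegral_congr_fun measurableSet_closedBall fun x hx => by simp [hφ.eq_one x hx]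
    _ ≤ ∫ x, gradSq (state u v θ) x * φ x :=
        setIntegral_le_integral (integrable_mul_of_hasCompactSupport hG hφ.contDiff.continuous
          hφ.hasCompactSupport) (Eventually.of_forall fun x =>
            mul_nonneg (gradSq_nonneg _ x) (hφ.nonneg x))
    _ ≤ _ := by
        rw [h.integral_gradSq_mul hφ.contDiff hφ.hasCompactSupport]
        linarith [abs_le.mp hdiffusion, abs_le.mp hflux, abs_le.mp hpressure]

end Caccioppoli

section Sobolev

variable {ι : Type*} [Fintype ι] {w : ι → R3 → ℝ}

lemma contDiff_toLp (hw : ∀ k, ContDiff ℝ ∞ (w k)) :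
    ContDiff ℝ ∞ fun x => WithLp.toLp 2 fun k => w k x :=
  contDiff_euclidean.mpr hw

lemma norm_toLp_sq (w : ι → R3 → ℝ) (x : R3) :
    ‖WithLp.toLp 2 fun k => w k x‖ ^ 2 = normSq w x := by
  simp [EuclideanSpace.norm_sq_eq, normSq]

lemma norm_fderiv_toLp_sq_le (hw : ∀ k, ContDiff ℝ ∞ (w k)) (x : R3) :
    ‖fderiv ℝ (fun x => WithLp.toLp 2 fun k => w k x) x‖ ^ 2 ≤ gradSq w x := by
  have hd := ((contDiff_toLp hw).differentiable (by simp) x).hasFDerivAt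
  rw [← Real.le_sqrt (norm_nonneg _) (gradSq_nonneg w x)]
  refine ContinuousLinearMap.opNorm_le_bound _ (Real.sqrt_nonneg _) fun y => ?_
  have happly (k : ι) : fderiv ℝ (fun x => WithLp.toLp 2 fun k => w k x) x y k =
      ∑ j, pd (w k) j x * y j := by
    have hk := (EuclideanSpace.proj (𝕜 := ℝ) k).hasFDerivAt.comp x hd
    rw [Finset.sum_congr rfl fun j _ => mul_comm _ (y j), ← fderiv_eq_sum_pd]
    exact congr($(hk.fderiv) y).symm
  rw [EuclideanSpace.norm_eq, EuclideanSpace.norm_eq y, ← Real.sqrt_mul (gradSq_nonneg w x)]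
  refine Real.sqrt_le_sqrt ?_
  simp only [happly, Real.norm_eq_abs, sq_abs]
  rw [gradSq, Finset.sum_mul]
  exact Finset.sum_le_sum fun k _ => Finset.sum_mul_sq_le_sq_mul_sq _ _ _

lemma lpNorm_toLp_six_pow (hw : ∀ k, ContDiff ℝ ∞ (w k)) :
    lpNorm (fun x => WithLp.toLp 2 fun k => w k x) 6 volume ^ 6 = ∫ x, normSq w x ^ 3 := by
  have hpow (x : R3) : ‖WithLp.toLp 2 fun k => w k x‖ ^ (6 : ℝ) = normSq w x ^ 3 := by
    rw [← norm_toLp_sq, ← pow_mul]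
    exact mod_cast Real.rpow_natCast ‖WithLp.toLp 2 fun k => w k x‖ 6
  rw [lpNorm_eq_integral_norm_rpow_toReal (by simp) (by simp)
    (contDiff_toLp hw).continuous.aestronglyMeasurable, ENNReal.toReal_ofNat,
    ← Real.rpow_mul_natCast (integral_nonneg fun x => by positivity)]
  norm_num [hpow]

lemma gradSq_eq_zero_of_notMem_tsupport {x : R3} (hx : ∀ k, x ∉ tsupport (w k)) :
    gradSq w x = 0 :=
  Finset.sum_eq_zero fun k _ => Finset.sum_eq_zero fun j _ => by
    rw [image_eq_zero_of_notMem_tsupport fun h => hx k (tsupport_pd_subset (w k) j h),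
      zero_pow two_ne_zero]

variable (ι) in
lemma exists_integral_normSq_pow_le : ∃ C, 0 ≤ C ∧ ∀ w : ι → R3 → ℝ, (∀ k, ContDiff ℝ ∞ (w k)) →
    (∀ k, HasCompactSupport (w k)) → ∫ x, normSq w x ^ 3 ≤ C * (∫ x, gradSq w x) ^ 3 := by
  refine ⟨eLpNormLESNormFDerivOfEqInnerConst (volume : Measure R3) 2 ^ 6, by positivity,
    fun w hw hc => ?_⟩
  set K := eLpNormLESNormFDerivOfEqInnerConst (volume : Measure R3) 2
  set W : R3 → EuclideanSpace ℝ ι := fun x => WithLp.toLp 2 fun k => w k x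
  have hW : ContDiff ℝ ∞ W := contDiff_toLp hw
  have hWc : HasCompactSupport W :=
    HasCompactSupport.intro (isCompact_iUnion hc) fun x hx => by
      ext k
      exact image_eq_zero_of_notMem_tsupport (f := w k) fun h => hx (Set.mem_iUnion_of_mem k h)
  have hDW : MemLp (fderiv ℝ W) 2 :=
    (hW.continuous_fderiv (by simp)).memLp_of_hasCompactSupport (hWc.fderiv (𝕜 := ℝ))
  have hsob : eLpNorm W 6 ≤ K * eLpNorm (fderiv ℝ W) 2 :=
    eLpNorm_le_eLpNorm_fderiv_of_eq_inner volume (p := 2) (p' := 6) (hW.of_le (by simp)) hWc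
      one_le_two (by simp) (by norm_num)
  have hnorm : lpNorm W 6 volume ≤ K * lpNorm (fderiv ℝ W) 2 volume := by
    rw [← toReal_eLpNorm hW.continuous.aestronglyMeasurable, ← toReal_eLpNorm hDW.1]
    exact (ENNReal.toReal_mono (ENNReal.mul_ne_top (by simp) hDW.2.ne) hsob).trans_eq (by simp)
  have htwo : lpNorm (fderiv ℝ W) 2 volume ^ 2 ≤ ∫ x, gradSq w x := by
    have hint : Integrable (gradSq w) :=
      (contDiff_gradSq hw).continuous.integrable_of_hasCompactSupport
        (HasCompactSupport.intro (isCompact_iUnion hc) fun x hx =>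
          gradSq_eq_zero_of_notMem_tsupport fun k h => hx (Set.mem_iUnion_of_mem k h))
    rw [← lpNorm_norm hDW.1, lpNorm_two_eq_sqrt_integral hDW.1.norm,
      Real.sq_sqrt (integral_nonneg fun x => sq_nonneg _)]
    exact integral_mono ((memLp_two_iff_integrable_sq_norm hDW.1).mp hDW) hint
      (norm_fderiv_toLp_sq_le hw)
  calc ∫ x, normSq w x ^ 3 = lpNorm W 6 volume ^ 6 := (lpNorm_toLp_six_pow hw).symm
    _ ≤ (K * lpNorm (fderiv ℝ W) 2 volume) ^ 6 := pow_le_pow_left₀ lpNorm_nonneg hnorm 6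
    _ = K ^ 6 * (lpNorm (fderiv ℝ W) 2 volume ^ 2) ^ 3 := by ring
    _ ≤ K ^ 6 * (∫ x, gradSq w x) ^ 3 := by gcongr

lemma gradSq_mul_le {φ : R3 → ℝ} {c : ℝ} (hφ : ContDiff ℝ ∞ φ) (hw : ∀ k, ContDiff ℝ ∞ (w k))
    {x : R3} (hφ1 : |φ x| ≤ 1) (hc : ∀ j, |pd φ j x| ≤ c) :
    gradSq (fun k y => φ y * w k y) x ≤ 2 * gradSq w x + 6 * c ^ 2 * normSq w x := by
  have hterm (k : ι) (j : Fin 3) : pd (fun y => φ y * w k y) j x ^ 2 ≤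
      2 * pd (w k) j x ^ 2 + 2 * c ^ 2 * w k x ^ 2 := by
    rw [pd_fun_mul (differentiable_of_smooth hφ).differentiableAt
      (differentiable_of_smooth (hw k)).differentiableAt]
    refine (add_sq_le ..).trans ?_
    rw [mul_pow, mul_pow, mul_add, mul_assoc 2 (c ^ 2)]
    refine add_le_add (mul_le_mul_of_nonneg_left ?_ zero_le_two)
      (mul_le_mul_of_nonneg_left (mul_le_mul_of_nonneg_right ?_ (sq_nonneg _)) zero_le_two)
    · exact mul_le_of_le_one_left (sq_nonneg _) ((sq_le_one_iff_abs_le_one _).mpr hφ1)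
    · exact sq_le_sq' (abs_le.mp (hc j)).1 (abs_le.mp (hc j)).2
  calc gradSq (fun k y => φ y * w k y) x
      ≤ ∑ k, ∑ j, (2 * pd (w k) j x ^ 2 + 2 * c ^ 2 * w k x ^ 2) :=
        Finset.sum_le_sum fun k _ => Finset.sum_le_sum fun j _ => hterm k j
    _ = _ := by
        simp only [Finset.sum_add_distrib, gradSq, normSq, Finset.mul_sum, Finset.sum_const,
          Finset.card_univ, Fintype.card_fin, nsmul_eq_mul]
        congr 1
        exact Finset.sum_congr rfl fun k _ => by push_cast; ring

section Localization

variable {φ : R3 → ℝ} {C ρ s : ℝ}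

lemma IsCutoff.setIntegral_normSq_pow_le (hφ : IsCutoff C ρ s φ) (hw : ∀ k, ContDiff ℝ ∞ (w k)) :
    ∫ x in closedBall 0 ρ, normSq w x ^ 3 ≤ ∫ x, normSq (fun k y => φ y * w k y) x ^ 3 := by
  have hint : Integrable fun x => normSq (fun k y => φ y * w k y) x ^ 3 :=
    ((contDiff_normSq fun k => hφ.contDiff.mul (hw k)).continuous.pow
      3).integrable_of_hasCompactSupport
        (HasCompactSupport.intro hφ.hasCompactSupport fun x hx => by
          simp [normSq, image_eq_zero_of_notMem_tsupport hx])
  refine (setIntegral_congr_fun measurableSet_closedBall fun x hx => ?_).trans_le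
    (setIntegral_le_integral hint (Eventually.of_forall fun x => pow_nonneg (normSq_nonneg _ x) 3))
  simp [normSq, hφ.eq_one x hx]

lemma IsCutoff.integral_gradSq_mul_le (hφ : IsCutoff C ρ s φ) (hw : ∀ k, ContDiff ℝ ∞ (w k)) :
    ∫ x, gradSq (fun k y => φ y * w k y) x ≤
      (2 + 6 * C ^ 2) * ((∫ x in closedBall 0 (ρ + s), gradSq w x) +
        s⁻¹ ^ 2 * ∫ x in closedBall 0 (ρ + s), normSq w x) := by
  have hN := (contDiff_normSq hw).continuous
  have hG := (contDiff_gradSq hw).continuous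
  have hGφ : Continuous (gradSq fun k y => φ y * w k y) :=
    (contDiff_gradSq fun k => hφ.contDiff.mul (hw k)).continuous
  have hball : ∫ x in closedBall 0 (ρ + s), gradSq (fun k y => φ y * w k y) x =
      ∫ x, gradSq (fun k y => φ y * w k y) x :=
    setIntegral_eq_integral_of_forall_compl_eq_zero fun x hx =>
      gradSq_eq_zero_of_notMem_tsupport fun k h =>
        hx (hφ.tsupport_subset (tsupport_mul_subset_left h))
  have hpoint (x : R3) : gradSq (fun k y => φ y * w k y) x ≤
      2 * gradSq w x + 6 * (C * s⁻¹) ^ 2 * normSq w x :=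
    gradSq_mul_le hφ.contDiff hw (abs_le.mpr ⟨by linarith [hφ.nonneg x], hφ.le_one x⟩)
      fun j => hφ.abs_pd_le j x
  have hmono := setIntegral_closedBall_mono hGφ (by fun_prop) hpoint (ρ + s)
  rw [integral_add (integrableOn_closedBall (by fun_prop) _)
    (integrableOn_closedBall (by fun_prop) _), integral_const_mul, integral_const_mul,
    hball] at hmono
  have hD : 0 ≤ C ^ 2 * ∫ x in closedBall 0 (ρ + s), gradSq w x :=
    mul_nonneg (sq_nonneg C) (integral_nonneg (gradSq_nonneg w))
  have hN₀ : 0 ≤ s⁻¹ ^ 2 * ∫ x in closedBall 0 (ρ + s), normSq w x :=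
    mul_nonneg (sq_nonneg _) (integral_nonneg (normSq_nonneg w))
  linarith

end Localization

variable (ι) in
lemma exists_setIntegral_normSq_pow_le : ∃ C, 0 ≤ C ∧ ∀ w : ι → R3 → ℝ,
    (∀ k, ContDiff ℝ ∞ (w k)) → ∀ {ρ s : ℝ}, 0 ≤ ρ → 0 < s →
      ∫ x in closedBall 0 ρ, normSq w x ^ 3 ≤
        C * ((∫ x in closedBall 0 (ρ + s), gradSq w x) +
          s⁻¹ ^ 2 * ∫ x in closedBall 0 (ρ + s), normSq w x) ^ 3 := by
  obtain ⟨K, hK, hsob⟩ := exists_integral_normSq_pow_le ι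
  obtain ⟨C, -, hcutoff⟩ := exists_isCutoff
  refine ⟨K * (2 + 6 * C ^ 2) ^ 3, by positivity, fun w hw {ρ s} hρ hs => ?_⟩
  obtain ⟨φ, hφ⟩ := hcutoff ρ s hρ hs
  calc ∫ x in closedBall 0 ρ, normSq w x ^ 3 ≤ ∫ x, normSq (fun k y => φ y * w k y) x ^ 3 :=
        hφ.setIntegral_normSq_pow_le hw
    _ ≤ K * (∫ x, gradSq (fun k y => φ y * w k y) x) ^ 3 :=
        hsob _ (fun k => hφ.contDiff.mul (hw k)) fun k => hφ.hasCompactSupport.mul_right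
    _ ≤ K * ((2 + 6 * C ^ 2) * ((∫ x in closedBall 0 (ρ + s), gradSq w x) +
        s⁻¹ ^ 2 * ∫ x in closedBall 0 (ρ + s), normSq w x)) ^ 3 :=
        mul_le_mul_of_nonneg_left (pow_le_pow_left₀ (integral_nonneg (gradSq_nonneg _))
          (hφ.integral_gradSq_mul_le hw) 3) hK
    _ = _ := by ring

end Sobolev

section Interpolation

lemma pow_le_rpow_mul_add_rpow_mul {t κ a b : ℝ} {m : ℕ} (hm : m ≠ 0) (ht : 0 ≤ t) (hκ : 0 < κ)
    (ha : a ≤ m) (hb : m ≤ b) :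
    t ^ m ≤ κ ^ (m - a) * t ^ a + κ ^ (m - b) * t ^ b := by
  have hta : 0 ≤ κ ^ (m - a) * t ^ a := by positivity
  have htb : 0 ≤ κ ^ (m - b) * t ^ b := by positivity
  rcases ht.eq_or_lt with rfl | ht
  · rw [zero_pow hm]
    exact add_nonneg hta htb
  have hsplit (c : ℝ) : t ^ m = t ^ (m - c) * t ^ c := by
    rw [← Real.rpow_add ht, sub_add_cancel, Real.rpow_natCast]
  rcases le_total t κ with h | h
  · refine le_add_of_le_of_nonneg ?_ htb
    rw [hsplit a]
    gcongr
  · refine le_add_of_nonneg_of_le hta ?_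
    rw [hsplit b]
    gcongr ?_ * _
    exact Real.rpow_le_rpow_of_nonpos hκ h (sub_nonpos.mpr hb)

lemma integral_pow_le_rpow_mul_add_rpow_mul {α : Type*} [MeasurableSpace α] {μ : Measure α}
    {f : α → ℝ} {κ a b : ℝ} {m : ℕ} (hm : m ≠ 0) (hf₀ : ∀ x, 0 ≤ f x) (hκ : 0 < κ)
    (ha : a ≤ m) (hb : m ≤ b) (hfa : Integrable (fun x => f x ^ a) μ)
    (hfb : Integrable (fun x => f x ^ b) μ) :
    ∫ x, f x ^ m ∂μ ≤ κ ^ (m - a) * (∫ x, f x ^ a ∂μ) + κ ^ (m - b) * ∫ x, f x ^ b ∂μ := by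
  rw [← integral_const_mul, ← integral_const_mul,
    ← integral_add (hfa.const_mul _) (hfb.const_mul _)]
  exact integral_mono_of_nonneg (Eventually.of_forall fun x => pow_nonneg (hf₀ x) m)
    ((hfa.const_mul _).add (hfb.const_mul _))
    (Eventually.of_forall fun x => pow_le_rpow_mul_add_rpow_mul hm (hf₀ x) hκ ha hb)

lemma integral_pow_succ_le_of_integral_pow_six_le {α : Type*} [MeasurableSpace α] {μ : Measure α}
    {f : α → ℝ} {q W : ℝ} {m : ℕ} (hf₀ : ∀ x, 0 ≤ f x) (hq₁ : 1 ≤ q) (hqm : q ≤ m + 1)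
    (hm : m ≤ 5) (hfq : Integrable (fun x => f x ^ q) μ) (hf6 : Integrable (fun x => f x ^ 6) μ)
    (hW : 1 ≤ W) (h6 : ∫ x, f x ^ 6 ∂μ ≤ W ^ 10) :
    ∫ x, f x ^ (m + 1) ∂μ ≤ (1 + ∫ x, f x ^ q ∂μ) * W ^ (2 * m) := by
  have hW₀ : 0 < W := one_pos.trans_le hW
  have hm' : (m : ℝ) ≤ 5 := by exact_mod_cast hm
  have hkey := integral_pow_le_rpow_mul_add_rpow_mul (μ := μ) (m := m + 1) (κ := W ^ (2 : ℝ))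
    (a := q) (b := 6) m.succ_ne_zero hf₀ (by positivity) (by push_cast; exact hqm)
    (by push_cast; linarith) hfq (by simpa only [Real.rpow_ofNat] using hf6)
  rw [← Real.rpow_mul hW₀.le, ← Real.rpow_mul hW₀.le] at hkey
  simp only [Real.rpow_ofNat] at hkey
  have hlow : W ^ (2 * (((m + 1 : ℕ) : ℝ) - q)) ≤ W ^ (2 * m) := by
    rw [← Real.rpow_natCast W (2 * m)]
    refine Real.rpow_le_rpow_of_exponent_le hW ?_
    push_cast
    linarith
  have hhigh : W ^ (2 * (((m + 1 : ℕ) : ℝ) - 6)) * W ^ 10 = W ^ (2 * m) := by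
    rw [← Real.rpow_natCast W 10, ← Real.rpow_natCast W (2 * m), ← Real.rpow_add hW₀]
    congr 1
    push_cast
    ring
  have hM : 0 ≤ ∫ x, f x ^ q ∂μ := integral_nonneg fun x => Real.rpow_nonneg (hf₀ x) q
  calc ∫ x, f x ^ (m + 1) ∂μ
      ≤ W ^ (2 * (((m + 1 : ℕ) : ℝ) - q)) * (∫ x, f x ^ q ∂μ) +
        W ^ (2 * (((m + 1 : ℕ) : ℝ) - 6)) * ∫ x, f x ^ 6 ∂μ := hkey
    _ ≤ W ^ (2 * m) * (∫ x, f x ^ q ∂μ) + W ^ (2 * (((m + 1 : ℕ) : ℝ) - 6)) * W ^ 10 := by gcongr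
    _ = (1 + ∫ x, f x ^ q ∂μ) * W ^ (2 * m) := by
        rw [hhigh]
        ring

lemma volume_real_closedBall_two_mul {R : ℝ} (hR : 0 ≤ R) :
    volume.real (closedBall (0 : R3) (2 * R)) = R ^ 3 * volume.real (closedBall (0 : R3) 2) := by
  rw [mul_comm, measureReal_def, Measure.addHaar_closedBall_mul _ _ hR zero_le_two,
    ENNReal.toReal_mul, ENNReal.toReal_ofReal (pow_nonneg hR _), finrank_euclideanSpace_fin,
    measureReal_def]

lemma rpow_mul_setIntegral_pow_le {f : R3 → ℝ} {q R δ : ℝ} {m : ℕ} {S : Set R3} (hm : m ≠ 0)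
    (hmq : m ≤ q) (hf₀ : ∀ x, 0 ≤ f x) (hfq : Integrable fun x => f x ^ q) (hR : 0 < R)
    (hδ : 0 < δ) (hS : S ⊆ closedBall 0 (2 * R)) :
    R ^ (3 * m / q - 3) * ∫ x in S, f x ^ m ≤
      δ ^ m * volume.real (closedBall (0 : R3) 2) + δ ^ (m - q) * ∫ x in S, f x ^ q := by
  have hq : 0 < q := (Nat.cast_pos.mpr hm.bot_lt).trans_le hmq
  have hfin : volume S ≠ ⊤ := measure_ne_top_of_subset hS measure_closedBall_lt_top.ne
  have hvol : volume.real S ≤ R ^ 3 * volume.real (closedBall (0 : R3) 2) :=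
    (measureReal_mono hS measure_closedBall_lt_top.ne).trans_eq
      (volume_real_closedBall_two_mul hR.le)
  have hkey := integral_pow_le_rpow_mul_add_rpow_mul (μ := volume.restrict S)
    (κ := δ * R ^ (-3 / q)) (a := 0) hm hf₀ (by positivity) (Nat.cast_nonneg m) hmq
    (by simpa only [Real.rpow_zero, IntegrableOn] using integrableOn_const hfin) hfq.integrableOn
  simp only [Real.rpow_zero, sub_zero, integral_const, smul_eq_mul, mul_one,
    measureReal_restrict_apply_univ, Real.mul_rpow hδ.le (Real.rpow_nonneg hR.le _),
    ← Real.rpow_mul hR.le, Real.rpow_natCast] at hkey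
  have hR₀ : R ^ (3 * m / q - 3) * R ^ (-3 / q * m) * R ^ 3 = 1 := by
    rw [← Real.rpow_natCast R 3, ← Real.rpow_add hR, ← Real.rpow_add hR, ← Real.rpow_zero R]
    congr 1
    push_cast
    ring
  have hRq : R ^ (3 * m / q - 3) * R ^ (-3 / q * (m - q)) = 1 := by
    rw [← Real.rpow_add hR, ← Real.rpow_zero R]
    congr 1
    field_simp
    ring
  calc R ^ (3 * m / q - 3) * ∫ x in S, f x ^ m
      ≤ R ^ (3 * m / q - 3) * (δ ^ m * R ^ (-3 / q * m) *
          (R ^ 3 * volume.real (closedBall (0 : R3) 2)) +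
          δ ^ (m - q) * R ^ (-3 / q * (m - q)) * ∫ x in S, f x ^ q) := by
        gcongr
        exact hkey.trans (by gcongr)
    _ = (R ^ (3 * m / q - 3) * R ^ (-3 / q * m) * R ^ 3) *
          (δ ^ m * volume.real (closedBall (0 : R3) 2)) +
          (R ^ (3 * m / q - 3) * R ^ (-3 / q * (m - q))) *
            (δ ^ (m - q) * ∫ x in S, f x ^ q) := by ring
    _ = _ := by rw [hR₀, hRq, one_mul, one_mul]

lemma tendsto_setIntegral_compl_closedBall {E : Type*} [NormedAddCommGroup E] [MeasurableSpace E]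
    [OpensMeasurableSpace E] {μ : Measure E} {g : E → ℝ} (hg : Integrable g μ) :
    Tendsto (fun r : ℝ => ∫ x in (closedBall 0 r)ᶜ, g x ∂μ) atTop (nhds 0) := by
  have hanti : Antitone fun r : ℝ => (closedBall (0 : E) r)ᶜ := fun r s hrs =>
    Set.compl_subset_compl.mpr (closedBall_subset_closedBall hrs)
  have hempty : ⋂ r : ℝ, (closedBall (0 : E) r)ᶜ = ∅ := by
    rw [← Set.compl_iUnion, Set.compl_empty_iff]
    exact Set.eq_univ_of_forall fun x =>
      Set.mem_iUnion.mpr ⟨‖x‖, mem_closedBall_zero_iff.mpr le_rfl⟩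
  simpa only [hempty, setIntegral_empty] using tendsto_setIntegral_of_antitone
    (fun r => measurableSet_closedBall.compl) hanti ⟨0, hg.integrableOn⟩

lemma rpow_mul_setIntegral_pow_le_add_tail {f : R3 → ℝ} {q r R δ : ℝ} {m : ℕ} (hm : m ≠ 0)
    (hmq : m ≤ q) (hf : Continuous f) (hf₀ : ∀ x, 0 ≤ f x) (hfq : Integrable fun x => f x ^ q)
    (hR : 0 < R) (hδ : 0 < δ) :
    R ^ (3 * m / q - 3) * ∫ x in closedBall 0 (2 * R), f x ^ m ≤
      R ^ (3 * m / q - 3) * (∫ x in closedBall 0 r, f x ^ m) +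
        (δ ^ m * volume.real (closedBall (0 : R3) 2) +
          δ ^ (m - q) * ∫ x in (closedBall 0 r)ᶜ, f x ^ q) := by
  have hfm : Continuous fun x => f x ^ m := hf.pow m
  have hinner : ∫ x in closedBall 0 (2 * R) ∩ closedBall 0 r, f x ^ m ≤
      ∫ x in closedBall 0 r, f x ^ m :=
    setIntegral_mono_set (integrableOn_closedBall hfm r)
      (Eventually.of_forall fun x => pow_nonneg (hf₀ x) m)
      (Eventually.of_forall Set.inter_subset_right)
  have htail : ∫ x in closedBall 0 (2 * R) \ closedBall 0 r, f x ^ q ≤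
      ∫ x in (closedBall 0 r)ᶜ, f x ^ q :=
    setIntegral_mono_set hfq.integrableOn
      (Eventually.of_forall fun x => Real.rpow_nonneg (hf₀ x) q)
      (Eventually.of_forall (Set.sdiff_subset_compl _ _))
  rw [← integral_inter_add_sdiff measurableSet_closedBall
    (integrableOn_closedBall hfm (2 * R)), mul_add]
  gcongr
  exact (rpow_mul_setIntegral_pow_le hm hmq hf₀ hfq hR hδ Set.sdiff_subset).trans (by gcongr)

lemma tendsto_rpow_mul_setIntegral_pow {f : R3 → ℝ} {q : ℝ} {m : ℕ} (hm : m ≠ 0) (hmq : m < q)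
    (hf : Continuous f) (hf₀ : ∀ x, 0 ≤ f x) (hfq : Integrable fun x => f x ^ q) :
    Tendsto (fun R : ℝ => R ^ (3 * m / q - 3) * ∫ x in closedBall 0 (2 * R), f x ^ m) atTop
      (nhds 0) := by
  have hexp : 3 * m / q - 3 < 0 := by
    rw [sub_neg, div_lt_iff₀ ((Nat.cast_nonneg m).trans_lt hmq)]
    linarith
  refine tendsto_order.mpr ⟨fun a ha => ?_, fun ε hε => ?_⟩
  · filter_upwards [eventually_gt_atTop 0] with R hR
    exact ha.trans_le (mul_nonneg (by positivity) (integral_nonneg fun x => pow_nonneg (hf₀ x) m))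
  have hsmall : Tendsto (fun δ : ℝ => δ ^ m * volume.real (closedBall (0 : R3) 2))
      (nhdsWithin 0 (Set.Ioi 0)) (nhds 0) := by
    refine tendsto_nhdsWithin_of_tendsto_nhds (Continuous.tendsto' (by fun_prop) _ _ ?_)
    rw [zero_pow hm, zero_mul]
  obtain ⟨δ, hδε, hδ⟩ :=
    ((hsmall.eventually_lt_const (by positivity : 0 < ε / 3)).and self_mem_nhdsWithin).exists
  have htail := (tendsto_setIntegral_compl_closedBall hfq).const_mul (δ ^ (m - q))
  rw [mul_zero] at htail
  obtain ⟨r, hr⟩ := (htail.eventually_lt_const (by positivity : 0 < ε / 3)).exists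
  have hinner := (tendsto_rpow_neg_atTop (neg_pos.mpr hexp)).mul_const
    (∫ x in closedBall 0 r, f x ^ m)
  rw [neg_neg, zero_mul] at hinner
  filter_upwards [hinner.eventually_lt_const (by positivity : 0 < ε / 3), eventually_gt_atTop 0]
    with R hRε hR
  have := rpow_mul_setIntegral_pow_le_add_tail (r := r) hm hmq.le hf hf₀ hfq hR hδ
  linarith

end Interpolation

section Negligible

variable {N f g : R3 → ℝ} {X X' : ℝ → ℝ → ℝ} {p q : ℝ}

/-- On the balls of radius `ρ ≤ 2R` the quantity `X ρ` is at most `ε W³`, where `W ≥ 1` measures the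
ball through `∫ N³ ≤ W¹⁰`. By the Sobolev inequality the dissipation dominates `W ^ (10 / 3)`, so
that such a quantity is of lower order in the Caccioppoli inequality. -/
def CubicallyBounded (N : R3 → ℝ) (X : ℝ → ℝ) (ε R : ℝ) : Prop :=
  ∀ ρ ≤ 2 * R, ∀ W, 1 ≤ W → ∫ x in closedBall 0 ρ, N x ^ 3 ≤ W ^ 10 → X ρ ≤ ε * W ^ 3

/-- A quantity `X R ρ` attached to the ball of radius `ρ ≤ 2R` is negligible against the density
`N` if, in the sense of `CubicallyBounded`, it is `o(W³)` as `R → ∞`. -/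
def NegligibleAgainst (N : R3 → ℝ) (X : ℝ → ℝ → ℝ) : Prop :=
  ∀ ε, 0 < ε → ∀ᶠ R in atTop, CubicallyBounded N (X R) ε R

lemma NegligibleAgainst.add (hX : NegligibleAgainst N X) (hX' : NegligibleAgainst N X') :
    NegligibleAgainst N fun R ρ => X R ρ + X' R ρ := by
  intro ε hε
  filter_upwards [hX (ε / 2) (by positivity), hX' (ε / 2) (by positivity)]
    with R hR hR' ρ hρ W hW hN
  linarith [hR ρ hρ W hW hN, hR' ρ hρ W hW hN]

lemma NegligibleAgainst.mono (hX : NegligibleAgainst N X)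
    (h : ∀ᶠ R in atTop, ∀ ρ, X' R ρ ≤ X R ρ) : NegligibleAgainst N X' := by
  intro ε hε
  filter_upwards [hX ε hε, h] with R hR hle ρ hρ W hW hN
  exact (hle ρ).trans (hR ρ hρ W hW hN)

lemma negligibleAgainst_of_le_mul {Y : ℝ → ℝ} (hY : Tendsto Y atTop (nhds 0))
    (h : ∀ᶠ R in atTop, ∀ ρ ≤ 2 * R, ∀ W, 1 ≤ W →
      ∫ x in closedBall 0 ρ, N x ^ 3 ≤ W ^ 10 → X R ρ ≤ Y R * W ^ 3) :
    NegligibleAgainst N X := by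
  intro ε hε
  filter_upwards [h, hY.eventually_le_const hε] with R hR hYε ρ hρ W hW hN
  exact (hR ρ hρ W hW hN).trans (by gcongr)

lemma negligibleAgainst_of_le {Y : ℝ → ℝ} (hY : Tendsto Y atTop (nhds 0))
    (hY₀ : ∀ᶠ R in atTop, 0 ≤ Y R) (h : ∀ᶠ R in atTop, ∀ ρ ≤ 2 * R, X R ρ ≤ Y R) :
    NegligibleAgainst N X := by
  refine negligibleAgainst_of_le_mul hY ?_
  filter_upwards [h, hY₀] with R hR hYR ρ hρ W hW _
  exact (hR ρ hρ).trans (le_mul_of_one_le_right hYR (one_le_pow₀ hW))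

lemma setIntegral_closedBall_pow_mono_radius {r r' : ℝ} (hf : Continuous f) (hf₀ : ∀ x, 0 ≤ f x)
    (hr : r ≤ r') (m : ℕ) :
    ∫ x in closedBall 0 r, f x ^ m ≤ ∫ x in closedBall 0 r', f x ^ m :=
  setIntegral_closedBall_mono_radius (hf.pow m) (fun x => pow_nonneg (hf₀ x) m) hr

lemma setIntegral_pow_succ_le_of_sq_le {ρ W : ℝ} {m : ℕ} (hN : Continuous N) (hf : Continuous f)
    (hf₀ : ∀ x, 0 ≤ f x) (hfN : ∀ x, f x ^ 2 ≤ N x) (hq₁ : 1 ≤ q) (hqm : q ≤ m + 1) (hm : m ≤ 5)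
    (hfq : Integrable fun x => f x ^ q) (hW : 1 ≤ W)
    (hNW : ∫ x in closedBall 0 ρ, N x ^ 3 ≤ W ^ 10) :
    ∫ x in closedBall 0 ρ, f x ^ (m + 1) ≤ (1 + ∫ x, f x ^ q) * W ^ (2 * m) := by
  have hfN3 : ∫ x in closedBall 0 ρ, f x ^ 6 ≤ ∫ x in closedBall 0 ρ, N x ^ 3 :=
    setIntegral_closedBall_mono (hf.pow 6) (hN.pow 3)
      (fun x => (pow_mul (f x) 2 3).trans_le (pow_le_pow_left₀ (sq_nonneg _) (hfN x) 3)) ρ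
  refine (integral_pow_succ_le_of_integral_pow_six_le hf₀ hq₁ hqm hm hfq.integrableOn
    (integrableOn_closedBall (hf.pow 6) ρ) hW (hfN3.trans hNW)).trans ?_
  have := setIntegral_le_integral (s := closedBall 0 ρ) hfq
    (Eventually.of_forall fun x => Real.rpow_nonneg (hf₀ x) q)
  gcongr

lemma negligibleAgainst_inv_mul_setIntegral_sq (hN : Continuous N) (hf : Continuous f)
    (hf₀ : ∀ x, 0 ≤ f x) (hfN : ∀ x, f x ^ 2 ≤ N x) (hq₁ : 1 ≤ q) (hq₃ : q ≤ 3)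
    (hfq : Integrable fun x => f x ^ q) :
    NegligibleAgainst N fun R ρ => R⁻¹ * ∫ x in closedBall 0 ρ, f x ^ 2 := by
  have hM : 0 ≤ ∫ x, f x ^ q := integral_nonneg fun x => Real.rpow_nonneg (hf₀ x) q
  rcases le_or_gt q 2 with hq₂ | hq₂
  · have hY : Tendsto (fun R : ℝ => R⁻¹ * (1 + ∫ x, f x ^ q)) atTop (nhds 0) := by
      simpa only [zero_mul] using tendsto_inv_atTop_zero.mul_const (1 + ∫ x, f x ^ q)
    refine negligibleAgainst_of_le_mul hY ?_
    filter_upwards [eventually_gt_atTop 0] with R hR ρ _ W hW hNW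
    have hsq := setIntegral_pow_succ_le_of_sq_le (m := 1) hN hf hf₀ hfN hq₁
      (by norm_num; exact hq₂) (by norm_num) hfq hW hNW
    rw [mul_assoc]
    gcongr
    exact hsq.trans (by gcongr; norm_num)
  · have hY := tendsto_rpow_mul_setIntegral_pow (m := 2) two_ne_zero (by exact_mod_cast hq₂)
      hf hf₀ hfq
    have hexp : -1 ≤ 3 * ((2 : ℕ) : ℝ) / q - 3 := by
      have : 2 ≤ 6 / q := by
        rw [le_div_iff₀ (by linarith)]
        linarith
      push_cast
      linear_combination this
    refine negligibleAgainst_of_le hY ?_ ?_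
    · filter_upwards [eventually_gt_atTop 0] with R hR
      exact mul_nonneg (by positivity) (integral_nonneg fun x => sq_nonneg _)
    · filter_upwards [eventually_ge_atTop 1] with R hR ρ hρ
      have hmono := setIntegral_closedBall_pow_mono_radius hf hf₀ hρ 2
      rw [← Real.rpow_neg_one]
      gcongr

lemma tendsto_inv_sq_mul_setIntegral_sq (hf₀ : ∀ x, 0 ≤ f x) (hp₂ : 2 ≤ p) (hp₆ : p < 6)
    (hfp : Integrable fun x => f x ^ p) :
    Tendsto (fun R : ℝ => R⁻¹ ^ 2 * ∫ x in closedBall 0 (2 * R), f x ^ 2) atTop (nhds 0) := by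
  set K := volume.real (closedBall (0 : R3) 2) + ∫ x, f x ^ p
  have hexp : 1 - 6 / p < 0 := by
    rw [sub_neg, lt_div_iff₀ (by linarith)]
    linarith
  have hY : Tendsto (fun R : ℝ => R ^ (1 - 6 / p) * K) atTop (nhds 0) := by
    simpa only [neg_neg, zero_mul] using
      (tendsto_rpow_neg_atTop (neg_pos.mpr hexp)).mul_const K
  refine squeeze_zero' ?_ ?_ hY
  · exact Eventually.of_forall fun R =>
      mul_nonneg (by positivity) (integral_nonneg fun x => sq_nonneg _)
  · filter_upwards [eventually_gt_atTop 0] with R hR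
    have hbound := rpow_mul_setIntegral_pow_le (m := 2) two_ne_zero (by exact_mod_cast hp₂) hf₀ hfp
      hR one_pos subset_rfl
    have hsplit : R⁻¹ ^ 2 = R ^ (1 - 6 / p) * R ^ (3 * ((2 : ℕ) : ℝ) / p - 3) := by
      rw [← Real.rpow_neg_one, ← Real.rpow_natCast, ← Real.rpow_mul hR.le, ← Real.rpow_add hR]
      congr 1
      push_cast
      ring
    rw [hsplit, mul_assoc]
    gcongr
    have hle := setIntegral_le_integral (s := closedBall 0 (2 * R)) hfp
      (Eventually.of_forall fun x => Real.rpow_nonneg (hf₀ x) p)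
    simp only [one_pow, Real.one_rpow, one_mul] at hbound
    exact hbound.trans (add_le_add_right hle _)

lemma negligibleAgainst_inv_sq_mul_setIntegral_sq (hf : Continuous f) (hf₀ : ∀ x, 0 ≤ f x)
    (hp₂ : 2 ≤ p) (hp₆ : p < 6) (hfp : Integrable fun x => f x ^ p) :
    NegligibleAgainst N fun R ρ => R⁻¹ ^ 2 * ∫ x in closedBall 0 ρ, f x ^ 2 := by
  refine negligibleAgainst_of_le (tendsto_inv_sq_mul_setIntegral_sq hf₀ hp₂ hp₆ hfp)
    (Eventually.of_forall fun R =>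
      mul_nonneg (by positivity) (integral_nonneg fun x => sq_nonneg _))
    (Eventually.of_forall fun R ρ hρ => ?_)
  have hmono := setIntegral_closedBall_pow_mono_radius hf hf₀ hρ 2
  gcongr

lemma negligibleAgainst_mul_sqrt_of_le_four (hN : Continuous N) (hf : Continuous f)
    (hf₀ : ∀ x, 0 ≤ f x) (hp₂ : 2 ≤ p) (hp₆ : p < 6) (hfp : Integrable fun x => f x ^ p)
    (hg : Continuous g) (hg₀ : ∀ x, 0 ≤ g x) (hgN : ∀ x, g x ^ 2 ≤ N x) (hq₁ : 1 ≤ q)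
    (hq₄ : q ≤ 4) (hgq : Integrable fun x => g x ^ q) :
    NegligibleAgainst N fun R ρ => R⁻¹ *
      (√(∫ x in closedBall 0 ρ, f x ^ 2) * √(∫ x in closedBall 0 ρ, g x ^ 4)) := by
  have hY : Tendsto (fun R : ℝ => √(R⁻¹ ^ 2 * ∫ x in closedBall 0 (2 * R), f x ^ 2) *
      √(1 + ∫ x, g x ^ q)) atTop (nhds 0) := by
    simpa only [Real.sqrt_zero, zero_mul] using
      (tendsto_inv_sq_mul_setIntegral_sq hf₀ hp₂ hp₆ hfp).sqrt.mul_const √(1 + ∫ x, g x ^ q)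
  refine negligibleAgainst_of_le_mul hY ?_
  filter_upwards [eventually_gt_atTop 0] with R hR ρ hρ W hW hNW
  have hM : 0 ≤ ∫ x, g x ^ q := integral_nonneg fun x => Real.rpow_nonneg (hg₀ x) q
  have hg4 : √(∫ x in closedBall 0 ρ, g x ^ 4) ≤ √(1 + ∫ x, g x ^ q) * W ^ 3 := by
    rw [← Real.sqrt_sq (by positivity : 0 ≤ W ^ 3), ← Real.sqrt_mul (by positivity), ← pow_mul]
    exact Real.sqrt_le_sqrt (setIntegral_pow_succ_le_of_sq_le (m := 3) hN hg hg₀ hgN hq₁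
      (by norm_num; exact hq₄) (by norm_num) hgq hW hNW)
  rw [Real.sqrt_mul (by positivity), Real.sqrt_sq (by positivity), mul_assoc, mul_assoc]
  have hmono := setIntegral_closedBall_pow_mono_radius hf hf₀ hρ 2
  gcongr

lemma tendsto_inv_mul_sqrt_mul_sqrt (hf : Continuous f) (hf₀ : ∀ x, 0 ≤ f x) (hp₄ : 4 < p)
    (hp : p ≤ 9 / 2) (hfp : Integrable fun x => f x ^ p) :
    Tendsto (fun R : ℝ => R⁻¹ * (√(∫ x in closedBall 0 (2 * R), f x ^ 2) *
      √(∫ x in closedBall 0 (2 * R), f x ^ 4))) atTop (nhds 0) := by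
  have h2 := tendsto_rpow_mul_setIntegral_pow (m := 2) two_ne_zero (by push_cast; linarith)
    hf hf₀ hfp
  have h4 := tendsto_rpow_mul_setIntegral_pow (m := 4) four_ne_zero (by exact_mod_cast hp₄)
    hf hf₀ hfp
  have hY := h2.sqrt.mul h4.sqrt
  rw [Real.sqrt_zero, zero_mul] at hY
  refine squeeze_zero' ?_ ?_ hY
  · filter_upwards [eventually_ge_atTop 0] with R hR
    positivity
  · filter_upwards [eventually_ge_atTop 1] with R hR
    have hR₀ : 0 < R := one_pos.trans_le hR
    have hscale :
        R⁻¹ ≤ √(R ^ (3 * ((2 : ℕ) : ℝ) / p - 3)) * √(R ^ (3 * ((4 : ℕ) : ℝ) / p - 3)) := by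
      rw [← Real.sqrt_mul (by positivity), ← Real.rpow_add hR₀]
      refine Real.le_sqrt_of_sq_le ?_
      rw [← Real.rpow_neg_one, ← Real.rpow_natCast, ← Real.rpow_mul hR₀.le]
      refine Real.rpow_le_rpow_of_exponent_le hR ?_
      have : 4 ≤ 18 / p := by
        rw [le_div_iff₀ (by linarith)]
        linarith
      push_cast
      linear_combination this
    rw [Real.sqrt_mul (by positivity), Real.sqrt_mul (by positivity), mul_mul_mul_comm]
    gcongr

lemma negligibleAgainst_inv_mul_sqrt_mul_sqrt_self (hN : Continuous N) (hf : Continuous f)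
    (hf₀ : ∀ x, 0 ≤ f x) (hfN : ∀ x, f x ^ 2 ≤ N x) (hp₂ : 2 ≤ p) (hp : p ≤ 9 / 2)
    (hfp : Integrable fun x => f x ^ p) :
    NegligibleAgainst N fun R ρ => R⁻¹ *
      (√(∫ x in closedBall 0 ρ, f x ^ 2) * √(∫ x in closedBall 0 ρ, f x ^ 4)) := by
  rcases le_or_gt p 4 with hp₄ | hp₄
  · exact negligibleAgainst_mul_sqrt_of_le_four hN hf hf₀ hp₂ (by linarith) hfp hf hf₀ hfN
      (by linarith) hp₄ hfp
  refine negligibleAgainst_of_le (tendsto_inv_mul_sqrt_mul_sqrt hf hf₀ hp₄ hp hfp) ?_ ?_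
  · filter_upwards [eventually_ge_atTop 0] with R hR
    positivity
  · filter_upwards [eventually_ge_atTop 0] with R hR ρ hρ
    have h2 := setIntegral_closedBall_pow_mono_radius hf hf₀ hρ 2
    have h4 := setIntegral_closedBall_pow_mono_radius hf hf₀ hρ 4
    gcongr

lemma sqrt_setIntegral_add_sq_le (hf : Continuous f) (hg : Continuous g) (r : ℝ) :
    √(∫ x in closedBall 0 r, (f x + g x) ^ 2) ≤
      √(∫ x in closedBall 0 r, f x ^ 2) + √(∫ x in closedBall 0 r, g x ^ 2) := by
  rw [← lpNorm_two_eq_sqrt_integral hf.aestronglyMeasurable,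
    ← lpNorm_two_eq_sqrt_integral hg.aestronglyMeasurable,
    ← lpNorm_two_eq_sqrt_integral (hf.fun_add hg).aestronglyMeasurable]
  exact lpNorm_add_le (memLp_two_closedBall hf r) one_le_two

variable {u v : R3 → R3} {θ : R3 → ℝ} {R : ℝ}

lemma sqrt_setIntegral_normSq_state_sq_le (hu : Continuous u) (hv : Continuous v)
    (hθ : Continuous θ) (r : ℝ) :
    √(∫ x in closedBall 0 r, normSq (state u v θ) x ^ 2) ≤
      √(∫ x in closedBall 0 r, ‖u x‖ ^ 4) + √(∫ x in closedBall 0 r, ‖v x‖ ^ 4) +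
        √(∫ x in closedBall 0 r, |θ x| ^ 4) := by
  have huv := sqrt_setIntegral_add_sq_le (hu.norm.pow 2) (hv.norm.pow 2) r
  have hall := sqrt_setIntegral_add_sq_le ((hu.norm.pow 2).add (hv.norm.pow 2)) (hθ.abs.pow 2) r
  have hstate (x : R3) : normSq (state u v θ) x = ‖u x‖ ^ 2 + ‖v x‖ ^ 2 + |θ x| ^ 2 := by
    rw [normSq_state, sq_abs]
  simp only [Pi.pow_apply, Pi.add_apply, ← pow_mul, Nat.reduceMul] at huv hall
  simp only [hstate]
  linarith

lemma cutoffError_le (hu : Continuous u) (hv : Continuous v) (hθ : Continuous θ) (hR : 1 ≤ R)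
    (ρ : ℝ) :
    cutoffError u v θ R ρ ≤ R⁻¹ ^ 2 * (∫ x in closedBall 0 ρ, ‖u x‖ ^ 2) +
      R⁻¹ * (√(∫ x in closedBall 0 ρ, ‖u x‖ ^ 2) * √(∫ x in closedBall 0 ρ, ‖u x‖ ^ 4)) +
      R⁻¹ * (√(∫ x in closedBall 0 ρ, ‖u x‖ ^ 2) * √(∫ x in closedBall 0 ρ, ‖v x‖ ^ 4)) +
      R⁻¹ * (√(∫ x in closedBall 0 ρ, ‖u x‖ ^ 2) * √(∫ x in closedBall 0 ρ, |θ x| ^ 4)) +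
      (R⁻¹ * (∫ x in closedBall 0 ρ, ‖v x‖ ^ 2) + R⁻¹ * ∫ x in closedBall 0 ρ, |θ x| ^ 2) +
      (R⁻¹ * (∫ x in closedBall 0 ρ, ‖v x‖ ^ 2) + R⁻¹ * ∫ x in closedBall 0 ρ, |θ x| ^ 2) := by
  have hR₀ : 0 ≤ R⁻¹ := inv_nonneg.mpr (zero_le_one.trans hR)
  have hinv : R⁻¹ ^ 2 ≤ R⁻¹ := pow_le_of_le_one hR₀ (inv_le_one_of_one_le₀ hR) two_ne_zero
  have hrem : ∫ x in closedBall 0 ρ, (‖v x‖ ^ 2 + θ x ^ 2) =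
      (∫ x in closedBall 0 ρ, ‖v x‖ ^ 2) + ∫ x in closedBall 0 ρ, |θ x| ^ 2 := by
    simp only [sq_abs]
    exact integral_add (integrableOn_closedBall (by fun_prop) ρ)
      (integrableOn_closedBall (by fun_prop) ρ)
  have hsq : ∫ x in closedBall 0 ρ, normSq (state u v θ) x =
      (∫ x in closedBall 0 ρ, ‖u x‖ ^ 2) + ∫ x in closedBall 0 ρ, (‖v x‖ ^ 2 + θ x ^ 2) := by
    simp only [normSq_state, add_assoc]
    exact integral_add (integrableOn_closedBall (by fun_prop) ρ)
      (integrableOn_closedBall (by fun_prop) ρ)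
  have htransport := mul_le_mul_of_nonneg_left (mul_le_mul_of_nonneg_left
    (sqrt_setIntegral_normSq_state_sq_le hu hv hθ ρ)
    (Real.sqrt_nonneg (∫ x in closedBall 0 ρ, ‖u x‖ ^ 2))) hR₀
  have hrem_le := mul_le_mul_of_nonneg_right hinv
    (integral_nonneg fun x => by positivity : 0 ≤ ∫ x in closedBall 0 ρ, (‖v x‖ ^ 2 + θ x ^ 2))
  rw [cutoffError, hsq]
  rw [hrem] at hrem_le ⊢
  linarith

lemma negligibleAgainst_cutoffError {q r : ℝ} (hu : Continuous u) (hv : Continuous v)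
    (hθ : Continuous θ) (hp₂ : 2 ≤ p) (hp : p ≤ 9 / 2) (hq₁ : 1 ≤ q) (hq₃ : q ≤ 3) (hr₁ : 1 ≤ r)
    (hr₃ : r ≤ 3) (hup : Integrable fun x => ‖u x‖ ^ p) (hvq : Integrable fun x => ‖v x‖ ^ q)
    (hθr : Integrable fun x => |θ x| ^ r) :
    NegligibleAgainst (normSq (state u v θ)) (cutoffError u v θ) := by
  have hN : Continuous (normSq (state u v θ)) := by
    simp only [funext (normSq_state u v θ)]
    fun_prop
  have huN (x : R3) : ‖u x‖ ^ 2 ≤ normSq (state u v θ) x := by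
    rw [normSq_state]
    linarith [sq_nonneg ‖v x‖, sq_nonneg (θ x)]
  have hvN (x : R3) : ‖v x‖ ^ 2 ≤ normSq (state u v θ) x := by
    rw [normSq_state]
    linarith [sq_nonneg ‖u x‖, sq_nonneg (θ x)]
  have hθN (x : R3) : |θ x| ^ 2 ≤ normSq (state u v θ) x := by
    rw [normSq_state, sq_abs]
    linarith [sq_nonneg ‖u x‖, sq_nonneg ‖v x‖]
  have hu₀ (x : R3) : 0 ≤ ‖u x‖ := norm_nonneg _
  have hv₀ (x : R3) : 0 ≤ ‖v x‖ := norm_nonneg _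
  have hθ₀ (x : R3) : 0 ≤ |θ x| := abs_nonneg _
  have huu := negligibleAgainst_inv_sq_mul_setIntegral_sq (N := normSq (state u v θ)) hu.norm hu₀
    hp₂ (by linarith) hup
  have huuu := negligibleAgainst_inv_mul_sqrt_mul_sqrt_self hN hu.norm hu₀ huN hp₂ hp hup
  have huvv := negligibleAgainst_mul_sqrt_of_le_four hN hu.norm hu₀ hp₂ (by linarith) hup
    hv.norm hv₀ hvN hq₁ (by linarith) hvq
  have huθθ := negligibleAgainst_mul_sqrt_of_le_four hN hu.norm hu₀ hp₂ (by linarith) hup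
    hθ.abs hθ₀ hθN hr₁ (by linarith) hθr
  have hrem := (negligibleAgainst_inv_mul_setIntegral_sq hN hv.norm hv₀ hvN hq₁ hq₃ hvq).add
    (negligibleAgainst_inv_mul_setIntegral_sq hN hθ.abs hθ₀ hθN hr₁ hr₃ hθr)
  refine (((((huu.add huuu).add huvv).add huθθ).add hrem).add hrem).mono ?_
  filter_upwards [eventually_ge_atTop 1] with R hR ρ
  exact cutoffError_le hu hv hθ hR ρ

end Negligible

section HoleFilling

lemma le_four_mul_of_le_half_mul_succ_add {y : ℕ → ℝ} {G M : ℝ} (hM : ∀ n, y n ≤ M)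
    (h : ∀ n, y n ≤ 1 / 2 * y (n + 1) + G * (3 / 2) ^ n) : y 0 ≤ 4 * G := by
  have hiter (n : ℕ) : y 0 ≤ (1 / 2) ^ n * M + 4 * G * (1 - (3 / 4) ^ n) := by
    suffices y 0 ≤ (1 / 2) ^ n * y n + 4 * G * (1 - (3 / 4) ^ n) from
      this.trans (by gcongr; exact hM n)
    induction n with
    | zero => simp
    | succ n ih =>
      have hpow : ((3 : ℝ) / 4) ^ n = (1 / 2) ^ n * (3 / 2) ^ n := by
        rw [← mul_pow]
        norm_num
      have hstep := mul_le_mul_of_nonneg_left (h n) (by positivity : (0 : ℝ) ≤ (1 / 2) ^ n)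
      rw [hpow] at ih
      rw [pow_succ, pow_succ, hpow]
      linarith
  have hlim : Tendsto (fun n : ℕ => ((1 : ℝ) / 2) ^ n * M + 4 * G * (1 - (3 / 4) ^ n)) atTop
      (nhds (0 * M + 4 * G * (1 - 0))) :=
    ((tendsto_pow_atTop_nhds_zero_of_lt_one (by norm_num) (by norm_num)).mul_const _).add
      (((tendsto_pow_atTop_nhds_zero_of_lt_one (by norm_num) (by norm_num)).const_sub _).const_mul
        _)
  linarith [ge_of_tendsto' hlim hiter]

lemma exists_inv_pow_le (N : ℕ) : ∃ τ : ℝ, 0 < τ ∧ τ < 1 ∧ τ⁻¹ ^ N ≤ 3 / 2 := by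
  have hcont : ContinuousAt (fun τ : ℝ => τ⁻¹ ^ N) 1 := (continuousAt_inv₀ one_ne_zero).pow N
  have hlt : ∀ᶠ τ : ℝ in nhds 1, τ⁻¹ ^ N < 3 / 2 :=
    hcont.eventually_lt_const (by norm_num)
  obtain ⟨τ, ⟨hτ, hpos⟩, hτ₁⟩ :=
    (((hlt.and (lt_mem_nhds one_pos)).filter_mono nhdsWithin_le_nhds).and
      (self_mem_nhdsWithin : Set.Iio (1 : ℝ) ∈ nhdsWithin 1 (Set.Iio 1))).exists
  exact ⟨τ, hpos, hτ₁, hτ.le⟩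

lemma exists_le_mul_of_le_half_mul_add {c : ℝ} (hc : 1 ≤ c) (N : ℕ) :
    ∃ K, 0 ≤ K ∧ ∀ {Y : ℝ → ℝ} {R G M : ℝ}, 0 ≤ R → 0 ≤ G → (∀ ρ ≤ 2 * R, Y ρ ≤ M) →
      (∀ ρ σ, 0 ≤ ρ → 0 < σ → σ ≤ 1 → ρ + c * (σ * R) ≤ 2 * R →
        Y ρ ≤ 1 / 2 * Y (ρ + c * (σ * R)) + G * σ⁻¹ ^ N) → Y R ≤ K * G := by
  obtain ⟨τ, hτ₀, hτ₁, hτ⟩ := exists_inv_pow_le N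
  have : 0 < 1 - τ := sub_pos.mpr hτ₁
  have hc₀ : 0 < c := one_pos.trans_le hc
  refine ⟨4 * (c / (1 - τ)) ^ N, by positivity, fun {Y R G M} hR hG hM hstep => ?_⟩
  have hτn (n : ℕ) : τ ^ n ≤ 1 := pow_le_one₀ hτ₀.le hτ₁.le
  set ρ : ℕ → ℝ := fun n => R + R * (1 - τ ^ n) with hρ
  have hρ₀ (n : ℕ) : 0 ≤ ρ n := add_nonneg hR (mul_nonneg hR (sub_nonneg.mpr (hτn n)))
  have hρ₂ (n : ℕ) : ρ n ≤ 2 * R := by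
    have : 0 ≤ R * τ ^ n := by positivity
    simp only [hρ]
    linarith
  have hρ_succ (n : ℕ) : ρ n + c * (τ ^ n * ((1 - τ) / c) * R) = ρ (n + 1) := by
    simp only [hρ]
    field_simp
    ring
  have hiter (n : ℕ) : Y (ρ n) ≤ 1 / 2 * Y (ρ (n + 1)) + G * (c / (1 - τ)) ^ N * (3 / 2) ^ n := by
    have hσ : τ ^ n * ((1 - τ) / c) ≤ 1 :=
      mul_le_one₀ (hτn n) (by positivity) ((div_le_one hc₀).mpr (by linarith))
    have h := hstep (ρ n) (τ ^ n * ((1 - τ) / c)) (hρ₀ n) (by positivity) hσ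
      ((hρ_succ n).trans_le (hρ₂ _))
    rw [hρ_succ, mul_inv, inv_div, mul_pow, ← inv_pow, pow_right_comm] at h
    refine h.trans ?_
    rw [mul_assoc G, mul_comm ((τ⁻¹ ^ N) ^ n)]
    gcongr
  have := le_four_mul_of_le_half_mul_succ_add (fun n => hM (ρ n) (hρ₂ n)) hiter
  simp only [hρ, pow_zero, sub_self, mul_zero, add_zero] at this
  linarith

lemma le_half_mul_add_of_le_cube {Y Y' A B W : ℝ} (hA : 0 ≤ A) (hB : 0 ≤ B) (hY' : 0 ≤ Y')
    (hW : 1 ≤ W) (hY : Y ≤ A * W ^ 3) (hWY : W ^ 10 ≤ 1 + B * Y' ^ 3) :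
    Y ≤ 1 / 2 * Y' + A * (1 + 8 * B * A ^ 3) ^ 3 := by
  rcases le_total (A * W ^ 3) (1 / 2 * Y') with h | h
  · have : 0 ≤ A * (1 + 8 * B * A ^ 3) ^ 3 := by positivity
    linarith
  have hW₉ : 1 ≤ W ^ 9 := one_le_pow₀ hW
  have hY'W : B * Y' ^ 3 ≤ B * (2 * (A * W ^ 3)) ^ 3 := by
    gcongr
    linarith
  have hWle : W ≤ 1 + 8 * B * A ^ 3 := by
    refine le_of_mul_le_mul_left ?_ (one_pos.trans_le hW₉)
    calc W ^ 9 * W = W ^ 10 := by ring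
      _ ≤ 1 + B * (2 * (A * W ^ 3)) ^ 3 := by linarith
      _ ≤ W ^ 9 + B * (2 * (A * W ^ 3)) ^ 3 := by gcongr
      _ = W ^ 9 * (1 + 8 * B * A ^ 3) := by ring
  calc Y ≤ A * W ^ 3 := hY
    _ ≤ A * (1 + 8 * B * A ^ 3) ^ 3 := by gcongr
    _ ≤ 1 / 2 * Y' + A * (1 + 8 * B * A ^ 3) ^ 3 := le_add_of_nonneg_left (by positivity)

/-- The dissipation in the ball of radius `ρ`, completed by the lower-order term that makes it
scale-invariant at scale `R`. -/
def ballEnergy {ι : Type*} [Fintype ι] (w : ι → R3 → ℝ) (R ρ : ℝ) : ℝ :=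
  (∫ x in closedBall 0 ρ, gradSq w x) + R⁻¹ ^ 2 * ∫ x in closedBall 0 ρ, normSq w x

variable {ι : Type*} [Fintype ι] {w : ι → R3 → ℝ} {R r r' : ℝ}

lemma ballEnergy_nonneg (w : ι → R3 → ℝ) (R r : ℝ) : 0 ≤ ballEnergy w R r :=
  add_nonneg (integral_nonneg fun x => gradSq_nonneg w x)
    (mul_nonneg (by positivity) (integral_nonneg fun x => normSq_nonneg w x))

lemma ballEnergy_mono (hw : ∀ k, ContDiff ℝ ∞ (w k)) (hr : r ≤ r') :
    ballEnergy w R r ≤ ballEnergy w R r' := by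
  have hgrad := setIntegral_closedBall_mono_radius (contDiff_gradSq hw).continuous
    (gradSq_nonneg w) hr
  have hnorm := setIntegral_closedBall_mono_radius (contDiff_normSq hw).continuous
    (normSq_nonneg w) hr
  rw [ballEnergy, ballEnergy]
  gcongr

lemma exists_setIntegral_normSq_pow_le_ballEnergy (ι : Type*) [Fintype ι] :
    ∃ C, 0 ≤ C ∧ ∀ {w : ι → R3 → ℝ}, (∀ k, ContDiff ℝ ∞ (w k)) → ∀ {ρ R σ}, 0 ≤ ρ → 0 < R →
      0 < σ → σ ≤ 1 →
      ∫ x in closedBall 0 ρ, normSq w x ^ 3 ≤ C * (σ⁻¹ ^ 2 * ballEnergy w R (ρ + σ * R)) ^ 3 := by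
  obtain ⟨C, hC, h⟩ := exists_setIntegral_normSq_pow_le ι
  refine ⟨C, hC, fun {w} hw {ρ R σ} hρ hR hσ hσ₁ => (h w hw hρ (mul_pos hσ hR)).trans ?_⟩
  have hgrad : 0 ≤ ∫ x in closedBall 0 (ρ + σ * R), gradSq w x :=
    integral_nonneg fun x => gradSq_nonneg w x
  have hnorm : 0 ≤ ∫ x in closedBall 0 (ρ + σ * R), normSq w x :=
    integral_nonneg fun x => normSq_nonneg w x
  have hk : 1 ≤ σ⁻¹ ^ 2 := one_le_pow₀ ((one_le_inv₀ hσ).mpr hσ₁)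
  rw [ballEnergy, mul_add, mul_inv, mul_pow, mul_assoc]
  gcongr
  exact le_mul_of_one_le_left hgrad hk

variable {u v : R3 → R3} {P θ : R3 → ℝ} {ρ σ ε : ℝ}

lemma cutoffError_mul_le (u v : R3 → R3) (θ : R3 → ℝ) (hR : 0 ≤ R) (hσ : 0 < σ) (hσ₁ : σ ≤ 1)
    (r : ℝ) : cutoffError u v θ (σ * R) r ≤ σ⁻¹ ^ 2 * cutoffError u v θ R r := by
  have hk : σ⁻¹ ≤ σ⁻¹ ^ 2 := le_self_pow₀ ((one_le_inv₀ hσ).mpr hσ₁) two_ne_zero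
  have : 0 ≤ ∫ x in closedBall 0 r, normSq (state u v θ) x :=
    integral_nonneg fun x => normSq_nonneg _ x
  have : 0 ≤ ∫ x in closedBall 0 r, (‖v x‖ ^ 2 + θ x ^ 2) :=
    integral_nonneg fun x => by positivity
  rw [cutoffError, cutoffError, mul_inv, mul_pow, mul_add, mul_add, mul_assoc, mul_assoc σ⁻¹,
    mul_assoc σ⁻¹]
  gcongr

lemma exists_ballEnergy_le_cutoffError :
    ∃ C, 0 ≤ C ∧ ∀ {u v P θ}, SmoothTCM u v P θ → ∀ {ρ R σ}, 0 ≤ ρ → 0 < R → 0 < σ → σ ≤ 1 →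
      ballEnergy (state u v θ) R ρ ≤
        C * (σ⁻¹ ^ 2 * cutoffError u v θ R (ρ + σ * R + σ * R)) := by
  obtain ⟨C, hC, hcacc⟩ := exists_caccioppoli
  refine ⟨C + 1, by positivity, fun {u v P θ} hsol {ρ R σ} hρ hR hσ hσ₁ => ?_⟩
  have hradius : ρ ≤ ρ + σ * R + σ * R := by linarith [mul_pos hσ hR]
  have hgrad : ∫ x in closedBall 0 ρ, gradSq (state u v θ) x ≤
      C * (σ⁻¹ ^ 2 * cutoffError u v θ R (ρ + σ * R + σ * R)) :=
    (hcacc hsol hρ (mul_pos hσ hR)).trans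
      (mul_le_mul_of_nonneg_left (cutoffError_mul_le u v θ hR.le hσ hσ₁ _) hC)
  have hnorm : R⁻¹ ^ 2 * (∫ x in closedBall 0 ρ, normSq (state u v θ) x) ≤
      cutoffError u v θ R (ρ + σ * R + σ * R) :=
    (mul_le_mul_of_nonneg_left (setIntegral_closedBall_mono_radius hsol.continuous_normSq
      (normSq_nonneg _) hradius) (by positivity)).trans
        (integral_normSq_le_cutoffError u v θ hR.le _)
  have hpos : 0 ≤ cutoffError u v θ R (ρ + σ * R + σ * R) :=
    (mul_nonneg (by positivity) (integral_nonneg fun x => normSq_nonneg _ x)).trans hnorm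
  have hk := le_mul_of_one_le_left hpos (one_le_pow₀ (n := 2) ((one_le_inv₀ hσ).mpr hσ₁))
  rw [ballEnergy]
  linarith

lemma exists_ballEnergy_le_half_mul_add :
    ∃ K, 0 ≤ K ∧ ∀ {u v P θ}, SmoothTCM u v P θ → ∀ {ε R ρ σ}, 0 ≤ ε → ε ≤ 1 → 0 < R →
      CubicallyBounded (normSq (state u v θ)) (cutoffError u v θ R) ε R →
      0 ≤ ρ → 0 < σ → σ ≤ 1 → ρ + 3 * (σ * R) ≤ 2 * R →
      ballEnergy (state u v θ) R ρ ≤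
        1 / 2 * ballEnergy (state u v θ) R (ρ + 3 * (σ * R)) + K * ε * σ⁻¹ ^ 38 := by
  obtain ⟨C, hC, henergy⟩ := exists_ballEnergy_le_cutoffError
  obtain ⟨C', hC', hsobolev⟩ := exists_setIntegral_normSq_pow_le_ballEnergy (Fin 3 ⊕ Fin 3 ⊕ Unit)
  refine ⟨C * (1 + 8 * C' * C ^ 3) ^ 3, by positivity,
    fun {u v P θ} hsol {ε R ρ σ} hε hε₁ hR hbound hρ hσ hσ₁ hρR => ?_⟩
  have hs : 0 < σ * R := mul_pos hσ hR
  set X := ∫ x in closedBall 0 (ρ + σ * R + σ * R), normSq (state u v θ) x ^ 3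
  have hX : 0 ≤ X := integral_nonneg fun x => pow_nonneg (normSq_nonneg _ x) 3
  obtain ⟨W, hW, hWX⟩ : ∃ W : ℝ, 1 ≤ W ∧ W ^ 10 = 1 + X :=
    ⟨(1 + X) ^ ((10 : ℕ) : ℝ)⁻¹, Real.one_le_rpow (by linarith) (by positivity),
      Real.rpow_inv_natCast_pow (by linarith) (by norm_num)⟩
  set k := σ⁻¹ ^ 2 with hk
  have hk₁ : 1 ≤ k := one_le_pow₀ ((one_le_inv₀ hσ).mpr hσ₁)
  have hYW : ballEnergy (state u v θ) R ρ ≤ C * (k * ε) * W ^ 3 := by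
    refine (henergy hsol hρ hR hσ hσ₁).trans ?_
    rw [mul_assoc, mul_assoc]
    gcongr
    exact hbound _ (by linarith) W hW (by linarith)
  have hWY : W ^ 10 ≤ 1 + C' * k ^ 3 * ballEnergy (state u v θ) R (ρ + 3 * (σ * R)) ^ 3 := by
    rw [hWX, mul_assoc, ← mul_pow, show ρ + 3 * (σ * R) = ρ + σ * R + σ * R + σ * R by ring]
    gcongr
    exact hsobolev hsol.contDiff_state (by positivity) hR hσ hσ₁
  refine (le_half_mul_add_of_le_cube (by positivity) (by positivity) (ballEnergy_nonneg _ _ _) hW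
    hYW hWY).trans (add_le_add_right ?_ _)
  have hε₃ : ε ^ 3 ≤ 1 := pow_le_one₀ hε hε₁
  have hk₆ : 1 ≤ k ^ 6 := one_le_pow₀ hk₁
  calc C * (k * ε) * (1 + 8 * (C' * k ^ 3) * (C * (k * ε)) ^ 3) ^ 3
      = C * (k * ε) * (1 + 8 * C' * C ^ 3 * k ^ 6 * ε ^ 3) ^ 3 := by ring
    _ ≤ C * (k * ε) * (k ^ 6 + 8 * C' * C ^ 3 * k ^ 6 * 1) ^ 3 := by gcongr
    _ = C * (1 + 8 * C' * C ^ 3) ^ 3 * ε * σ⁻¹ ^ 38 := by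
        rw [hk]
        ring

lemma exists_ballEnergy_le :
    ∃ K, 0 ≤ K ∧ ∀ {u v P θ}, SmoothTCM u v P θ → ∀ {ε R}, 0 ≤ ε → ε ≤ 1 → 0 < R →
      CubicallyBounded (normSq (state u v θ)) (cutoffError u v θ R) ε R →
      ballEnergy (state u v θ) R R ≤ K * ε := by
  obtain ⟨K, hK, hstep⟩ := exists_ballEnergy_le_half_mul_add
  obtain ⟨L, hL, hiter⟩ := exists_le_mul_of_le_half_mul_add (c := 3) (by norm_num) 38
  refine ⟨L * K, by positivity, fun {u v P θ} hsol {ε R} hε hε₁ hR hbound => ?_⟩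
  rw [mul_assoc]
  exact hiter hR.le (by positivity) (fun ρ hρ => ballEnergy_mono hsol.contDiff_state hρ)
    fun ρ σ hρ hσ hσ₁ hρR => hstep hsol hε hε₁ hR hbound hρ hσ hσ₁ hρR

lemma SmoothTCM.tendsto_ballEnergy (hsol : SmoothTCM u v P θ)
    (hnegl : NegligibleAgainst (normSq (state u v θ)) (cutoffError u v θ)) :
    Tendsto (fun R => ballEnergy (state u v θ) R R) atTop (nhds 0) := by
  obtain ⟨K, hK, hdecay⟩ := exists_ballEnergy_le
  refine tendsto_order.mpr ⟨fun a ha => Eventually.of_forall fun R =>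
    ha.trans_le (ballEnergy_nonneg _ _ _), fun η hη => ?_⟩
  filter_upwards [hnegl (min 1 (η / (K + 1))) (by positivity), eventually_gt_atTop 0]
    with R hbound hR
  calc ballEnergy (state u v θ) R R ≤ K * min 1 (η / (K + 1)) :=
        hdecay hsol (by positivity) (min_le_left _ _) hR hbound
    _ ≤ K * (η / (K + 1)) := by
        gcongr
        exact min_le_right _ _
    _ < η := by
        rw [mul_div_assoc', div_lt_iff₀ (by positivity)]
        linarith

lemma setIntegral_normSq_pow_eq_zero (hw : ∀ k, ContDiff ℝ ∞ (w k))
    (hlim : Tendsto (fun R => ballEnergy w R R) atTop (nhds 0)) (r : ℝ) :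
    ∫ x in closedBall 0 r, normSq w x ^ 3 = 0 := by
  obtain ⟨C, -, hsobolev⟩ := exists_setIntegral_normSq_pow_le_ballEnergy ι
  have hnonneg (x : R3) : 0 ≤ normSq w x ^ 3 := pow_nonneg (normSq_nonneg w x) 3
  refine le_antisymm ?_ (integral_nonneg hnonneg)
  have hbound := ((hlim.const_mul ((2 : ℝ)⁻¹⁻¹ ^ 2)).pow 3).const_mul C
  rw [mul_zero, zero_pow three_ne_zero, mul_zero] at hbound
  refine ge_of_tendsto hbound ?_
  filter_upwards [eventually_ge_atTop (2 * r), eventually_gt_atTop 0] with R hrR hR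
  have h := hsobolev hw (ρ := 2⁻¹ * R) (by positivity) hR (σ := 2⁻¹) (by norm_num) (by norm_num)
  rw [← add_mul, show (2⁻¹ + 2⁻¹ : ℝ) = 1 by norm_num, one_mul] at h
  exact (setIntegral_closedBall_mono_radius ((contDiff_normSq hw).continuous.pow 3) hnonneg
    (by linarith)).trans h

lemma normSq_eq_zero (hw : ∀ k, ContDiff ℝ ∞ (w k))
    (hlim : Tendsto (fun R => ballEnergy w R R) atTop (nhds 0)) (x : R3) : normSq w x = 0 := by
  have hcont : Continuous fun x => normSq w x ^ 3 := (contDiff_normSq hw).continuous.pow 3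
  have hae := (setIntegral_eq_zero_iff_of_nonneg_ae (s := closedBall 0 (‖x‖ + 1))
    (Eventually.of_forall fun x => pow_nonneg (normSq_nonneg w x) 3)
    (integrableOn_closedBall hcont _)).mp (setIntegral_normSq_pow_eq_zero hw hlim _)
  have heq := Measure.eqOn_open_of_ae_eq (ae_restrict_of_ae_restrict_of_subset
    ball_subset_closedBall hae) isOpen_ball hcont.continuousOn continuousOn_const
  exact pow_eq_zero_iff three_ne_zero |>.mp (heq (by simp))

end HoleFilling

lemma integrable_rpow_of_lintegral_lt_top {f : R3 → ℝ} {p : ℝ} (hf : Continuous f)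
    (hf₀ : ∀ x, 0 ≤ f x) (hp : 0 ≤ p) (hfp : ∫⁻ x, ENNReal.ofReal (f x ^ p) < ⊤) :
    Integrable fun x => f x ^ p :=
  ⟨(hf.rpow_const fun _ => Or.inr hp).aestronglyMeasurable,
    (hasFiniteIntegral_iff_ofReal (Eventually.of_forall fun x =>
      Real.rpow_nonneg (hf₀ x) p)).mpr hfp⟩

theorem liouville_tcm_B1_general (u v : R3 → R3) (pr θ : R3 → ℝ)
    (hu : ContDiff ℝ (⊤ : ℕ∞) u) (hv : ContDiff ℝ (⊤ : ℕ∞) v)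
    (hpr : ContDiff ℝ (⊤ : ℕ∞) pr) (hθ : ContDiff ℝ (⊤ : ℕ∞) θ)
    (hsol : TCM u v pr θ) (p q r : ℝ)
    (hp1 : 2 ≤ p) (hp2 : p ≤ 9 / 2) (hq1 : 1 ≤ q) (hq2 : q ≤ 3) (hr1 : 1 ≤ r) (hr2 : r ≤ 3)
    (hLu : (∫⁻ x : R3, ENNReal.ofReal (‖u x‖ ^ p)) < ⊤)
    (hLv : (∫⁻ x : R3, ENNReal.ofReal (‖v x‖ ^ q)) < ⊤)
    (hLθ : (∫⁻ x : R3, ENNReal.ofReal (|θ x| ^ r)) < ⊤) :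
    (∀ x, u x = 0) ∧ (∀ x, v x = 0) ∧ (∀ x, θ x = 0) := by
  have hsmooth : SmoothTCM u v pr θ := ⟨hu, hv, hpr, hθ, hsol⟩
  have hup := integrable_rpow_of_lintegral_lt_top hu.continuous.norm
    (fun _ => norm_nonneg _) (by linarith) hLu
  have hvq := integrable_rpow_of_lintegral_lt_top hv.continuous.norm
    (fun _ => norm_nonneg _) (by linarith) hLv
  have hθr := integrable_rpow_of_lintegral_lt_top hθ.continuous.abs
    (fun _ => abs_nonneg _) (by linarith) hLθ
  have hnegl := negligibleAgainst_cutoffError hu.continuous hv.continuous hθ.continuous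
    hp1 hp2 hq1 hq2 hr1 hr2 hup hvq hθr
  have hzero (x : R3) : ‖u x‖ ^ 2 + ‖v x‖ ^ 2 + θ x ^ 2 = 0 := by
    rw [← normSq_state]
    exact normSq_eq_zero hsmooth.contDiff_state (hsmooth.tendsto_ballEnergy hnegl) x
  refine ⟨fun x => norm_eq_zero.mp (sq_eq_zero_iff.mp ?_),
    fun x => norm_eq_zero.mp (sq_eq_zero_iff.mp ?_), fun x => sq_eq_zero_iff.mp ?_⟩ <;>
  linarith [hzero x, sq_nonneg ‖u x‖, sq_nonneg ‖v x‖, sq_nonneg (θ x)]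

theorem liouville_tcm_B1 (u v : R3 → R3) (pr θ : R3 → ℝ)
    (hu : ContDiff ℝ (⊤ : ℕ∞) u) (hv : ContDiff ℝ (⊤ : ℕ∞) v)
    (hpr : ContDiff ℝ (⊤ : ℕ∞) pr) (hθ : ContDiff ℝ (⊤ : ℕ∞) θ)
    (hsol : TCM u v pr θ)
    (p q r : ℝ)
    (hp1 : 3 ≤ p) (hp2 : p ≤ 9 / 2)
    (hq1 : 1 ≤ q) (hq2 : q < 2 * (p / (p - 1)))
    (hr1 : 1 ≤ r) (hr2 : r < 2 * (p / (p - 1)))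
    (hLu : (∫⁻ x : R3, ENNReal.ofReal (‖u x‖ ^ p)) < ⊤)
    (hLv : (∫⁻ x : R3, ENNReal.ofReal (‖v x‖ ^ q)) < ⊤)
    (hLθ : (∫⁻ x : R3, ENNReal.ofReal (|θ x| ^ r)) < ⊤) :
    (∀ x, u x = 0) ∧ (∀ x, v x = 0) ∧ (∀ x, θ x = 0) := by
  have hp' : 2 * (p / (p - 1)) ≤ 3 := by
    rw [← mul_div_assoc, div_le_iff₀ (by linarith)]
    linarith
  exact liouville_tcm_B1_general u v pr θ hu hv hpr hθ hsol p q r (by linarith) hp2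
    hq1 (hq2.le.trans hp') hr1 (hr2.le.trans hp') hLu hLv hLθ
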